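/- arXiv:hep-th/9201026 — 9 statements merged into one kernel-verified Lean document; each statement's English description precedes it below -/
import Mathlib

section
/- Orthonormality of the moving frame (Proposition, Eq. (2.2.18)): for all z, w ∈ ℂ and all 0 ≤ ℓ, ℓ' ≤ n, ⟨ṽ_ℓ(z,w), v̄_{ℓ'}(z,w)⟩ = τ_ℓ(z,w) · τ_{ℓ+1}(z,w) · δ_{ℓ ℓ'}. In particular the rescaled frame vectors ẽ_ℓ = ṽ_ℓ/√(τ_ℓτ_{ℓ+1}) and ē_ℓ = v̄_ℓ/√(τ_ℓτ_{ℓ+1}) are orthonormal wherever the τ's are nonzero. -/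
open scoped BigOperators

/-- Componentwise `i`-th iterated complex derivative of an embedding function. -/
noncomputable def Dv (n : ℕ) (f : ℂ → Fin (n + 1) → ℂ) (i : ℕ) (z : ℂ)
    (A : Fin (n + 1)) : ℂ :=
  iteratedDeriv i (fun t => f t A) z

/-- The matrix η(z,w)_{i j} = ∑_A f^{(i)}_A(z) g^{(j)}_A(w). -/
noncomputable def etaM (n : ℕ) (f g : ℂ → Fin (n + 1) → ℂ) (z w : ℂ) :
    Matrix (Fin (n + 1)) (Fin (n + 1)) ℂ :=
  Matrix.of fun i j => ∑ A, Dv n f (i : ℕ) z A * Dv n g (j : ℕ) w A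

/-- τ_ℓ(z,w): the leading ℓ×ℓ principal minor of η(z,w) (τ_0 = 1). -/
noncomputable def tauF (n : ℕ) (f g : ℂ → Fin (n + 1) → ℂ) (ℓ : ℕ) (z w : ℂ) : ℂ :=
  Matrix.det (Matrix.of fun i j : Fin ℓ => ∑ A, Dv n f (i : ℕ) z A * Dv n g (j : ℕ) w A)

/-- The A-th component of the vector ṽ_ℓ(z,w). -/
noncomputable def vtil (n : ℕ) (f g : ℂ → Fin (n + 1) → ℂ) (ℓ : ℕ) (z w : ℂ)
    (A : Fin (n + 1)) : ℂ :=
  Matrix.det (Matrix.of fun j i : Fin (ℓ + 1) =>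
    if (j : ℕ) < ℓ then ∑ B, Dv n f (i : ℕ) z B * Dv n g (j : ℕ) w B
    else Dv n f (i : ℕ) z A)

/-- The A-th component of the vector v̄_ℓ(z,w). -/
noncomputable def vbar (n : ℕ) (f g : ℂ → Fin (n + 1) → ℂ) (ℓ : ℕ) (z w : ℂ)
    (A : Fin (n + 1)) : ℂ :=
  Matrix.det (Matrix.of fun i j : Fin (ℓ + 1) =>
    if (i : ℕ) < ℓ then ∑ B, Dv n f (i : ℕ) z B * Dv n g (j : ℕ) w B
    else Dv n g (j : ℕ) w A)

/-- Bordered determinant. -/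
noncomputable def bordD (e : ℕ → ℕ → ℂ) (l : ℕ) (x : ℕ → ℂ) : ℂ :=
  Matrix.det (Matrix.of fun j i : Fin (l + 1) => if (j : ℕ) < l then e j i else x i)

lemma bordD_expand (e : ℕ → ℕ → ℂ) (l : ℕ) :
    ∃ c : Fin (l + 1) → ℂ, (∀ x, bordD e l x = ∑ i, c i * x i) ∧
      c (Fin.last l) = Matrix.det (Matrix.of fun j i : Fin l => e j i) := by
  refine ⟨fun i => (-1) ^ (l + (i : ℕ)) *
    Matrix.det (Matrix.of fun j k : Fin l => e j (i.succAbove k)), fun x => ?_, ?_⟩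
  · unfold bordD
    rw [Matrix.det_succ_row _ (Fin.last l)]
    refine Finset.sum_congr rfl fun i _ => ?_
    have : (Matrix.submatrix (Matrix.of fun j i : Fin (l + 1) =>
        if (j : ℕ) < l then e j i else x i) (Fin.last l).succAbove i.succAbove)
        = Matrix.of fun j k : Fin l => e j (i.succAbove k) := by
      ext j k
      simp
    rw [this]
    simp
    ring
  · simp [← two_mul, pow_mul]

lemma bordD_lt (e : ℕ → ℕ → ℂ) (l k : ℕ) (h : k < l) : bordD e l (e k) = 0 := by
  unfold bordD
  refine Matrix.det_zero_of_row_eq (i := (⟨k, by omega⟩ : Fin (l + 1))) (j := Fin.last l) ?_ ?_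
  · intro h'
    have := congrArg Fin.val h'
    simp at this
    omega
  · ext i
    simp [h]

lemma bordD_self (e : ℕ → ℕ → ℂ) (l : ℕ) :
    bordD e l (e l) = Matrix.det (Matrix.of fun j i : Fin (l + 1) => e j i) := by
  unfold bordD
  congr 1
  ext j i
  by_cases h : (j : ℕ) < l
  · simp [h]
  · have : (j : ℕ) = l := by omega
    simp [this]

lemma bordD_pair {ι : Type} [Fintype ι] (a b : ℕ → ι → ℂ) (e : ℕ → ℕ → ℂ)
    (he : ∀ i j, e i j = ∑ A, a i A * b j A) (l m : ℕ) (h : m ≤ l) :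
    ∑ A, bordD (fun j i => e i j) l (fun i => a i A) * bordD e m (fun j => b j A)
      = Matrix.det (Matrix.of fun j i : Fin l => e j i) *
        Matrix.det (Matrix.of fun j i : Fin (l + 1) => e j i) * (if l = m then 1 else 0) := by
  obtain ⟨c, hc, hcl⟩ := bordD_expand e m
  obtain ⟨d, hd, -⟩ := bordD_expand (fun j i => e i j) l
  have key : ∀ j : ℕ, ∑ A, bordD (fun j i => e i j) l (fun i => a i A) * b j A
      = bordD (fun j i => e i j) l (fun i => e i j) := by
    intro j
    simp only [hd]
    simp only [he, Finset.sum_mul, Finset.mul_sum]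
    rw [Finset.sum_comm]
    simp only [mul_assoc]
  have h1 : ∑ A, bordD (fun j i => e i j) l (fun i => a i A) * bordD e m (fun j => b j A)
      = ∑ j : Fin (m + 1), c j * bordD (fun j i => e i j) l (fun i => e i j) := by
    simp only [← key, hc, Finset.mul_sum]
    rw [Finset.sum_comm]
    refine Finset.sum_congr rfl fun j _ => Finset.sum_congr rfl fun A _ => by ring
  rw [h1, Fin.sum_univ_castSucc]
  have h2 : ∀ j : ℕ, j < l → bordD (fun j i => e i j) l (fun i => e i j) = 0 :=
    fun j hj => bordD_lt (fun j i => e i j) l j hj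
  rw [Finset.sum_eq_zero (fun j _ => by
    rw [h2 _ (by simpa using lt_of_lt_of_le j.2 h), mul_zero]), zero_add, hcl]
  by_cases hlm : l = m
  · subst hlm
    have h3 := bordD_self (fun j i => e i j) l
    rw [← Matrix.det_transpose] at h3
    simp only [Fin.val_last, if_true, mul_one]
    rw [h3]
    rfl
  · simp only [Fin.val_last, hlm, if_false, mul_zero]
    rw [h2 m (by omega), mul_zero]

/-- orthonormality of the moving frame (Eq. 2.2.18):
⟨ṽ_ℓ, v̄_{ℓ'}⟩ = τ_ℓ τ_{ℓ+1} δ_{ℓ ℓ'}. -/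
theorem stmt1 (n : ℕ) (f g : ℂ → Fin (n + 1) → ℂ)
    (hf : ∀ A, Differentiable ℂ fun z => f z A)
    (hg : ∀ A, Differentiable ℂ fun z => g z A) :
    ∀ (z w : ℂ) (ℓ ℓ' : ℕ), ℓ ≤ n → ℓ' ≤ n →
      ∑ A, vtil n f g ℓ z w A * vbar n f g ℓ' z w A
        = tauF n f g ℓ z w * tauF n f g (ℓ + 1) z w * (if ℓ = ℓ' then 1 else 0) := by
  intro z w l m _ _
  set e : ℕ → ℕ → ℂ := fun i j => ∑ A, Dv n f i z A * Dv n g j w A with he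
  rcases le_total m l with h | h
  · exact bordD_pair (fun i => Dv n f i z) (fun j => Dv n g j w) e (fun _ _ => rfl) l m h
  · have := bordD_pair (fun i => Dv n g i w) (fun j => Dv n f j z) (fun i j => e j i)
      (fun i j => Finset.sum_congr rfl fun A _ => mul_comm _ _) m l h
    have h4 : ∑ A, vtil n f g l z w A * vbar n f g m z w A
        = ∑ A, vbar n f g m z w A * vtil n f g l z w A :=
      Finset.sum_congr rfl fun A _ => mul_comm _ _
    rw [h4]
    refine Eq.trans this ?_
    by_cases hlm : l = m
    · subst hlm
      rw [← Matrix.det_transpose, ← Matrix.det_transpose (Matrix.of fun j i : Fin (l + 1) => e i j)]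
      rfl
    · simp [hlm, Ne.symm hlm]
end

section
/- Covariance under local rescaling (Theorem): let ρ, σ : ℂ → ℂ be entire, and let f̃(z) = ρ(z)·f(z) and g̃(w) = σ(w)·g(w) (componentwise products). Denote by τ̃_ℓ, ṽ̃_ℓ, v̄̃_ℓ the quantities built from f̃, g̃ exactly as τ_ℓ, ṽ_ℓ, v̄_ℓ are built from f, g. Then for all z, w ∈ ℂ: τ̃_ℓ(z,w) = ρ(z)^ℓ · σ(w)^ℓ · τ_ℓ(z,w) for 0 ≤ ℓ ≤ n+1, and ṽ̃_ℓ(z,w) = ρ(z)^{ℓ+1} σ(w)^ℓ · ṽ_ℓ(z,w), v̄̃_ℓ(z,w) = σ(w)^{ℓ+1} ρ(z)^ℓ · v̄_ℓ(z,w) for 0 ≤ ℓ ≤ n. -/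
open scoped BigOperators

/-- Leibniz coefficient matrix. -/
noncomputable def leib (ρ : ℂ → ℂ) (z : ℂ) (m : ℕ) : Matrix (Fin m) (Fin m) ℂ :=
  Matrix.of fun i k => ((i : ℕ).choose (k : ℕ) : ℂ) * iteratedDeriv ((i : ℕ) - k) ρ z

lemma Dv_leib (n : ℕ) (f : ℂ → Fin (n + 1) → ℂ) (ρ : ℂ → ℂ)
    (hf : ∀ A, Differentiable ℂ fun z => f z A) (hρ : Differentiable ℂ ρ) (z : ℂ)
    (A : Fin (n + 1)) (m : ℕ) (i : Fin m) :
    Dv n (fun z A => ρ z * f z A) i z A = ∑ k : Fin m, leib ρ z m i k * Dv n f k z A := by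
  have h1 : Dv n (fun z A => ρ z * f z A) i z A =
      ∑ k ∈ Finset.range ((i : ℕ) + 1),
        ((i : ℕ).choose k : ℂ) * iteratedDeriv ((i : ℕ) - k) ρ z * Dv n f k z A := by
    unfold Dv
    have h2 : (fun t => ρ t * f t A) = (fun t => f t A) * ρ := by
      ext t; simp [mul_comm]
    rw [h2, iteratedDeriv_mul (hf A).contDiff.contDiffAt hρ.contDiff.contDiffAt]
    exact Finset.sum_congr rfl fun k _ => by ring
  rw [h1]
  simp only [leib, Matrix.of_apply]
  rw [Fin.sum_univ_eq_sum_range (fun k => ((i : ℕ).choose k : ℂ) *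
    iteratedDeriv ((i : ℕ) - k) ρ z * Dv n f k z A) m]
  refine Finset.sum_subset ?_ ?_
  · intro k hk
    have := i.2
    simp only [Finset.mem_range] at *
    omega
  · intro k _ hk
    rw [Nat.choose_eq_zero_of_lt (by simp only [Finset.mem_range] at hk; omega)]
    simp

lemma leib_det (ρ : ℂ → ℂ) (z : ℂ) (m : ℕ) : (leib ρ z m).det = ρ z ^ m := by
  rw [Matrix.det_of_lowerTriangular]
  · simp [leib]
  · intro i j hij
    have h : (i : ℕ) < j := hij
    simp [leib, Nat.choose_eq_zero_of_lt h]

lemma tau_cov (n : ℕ) (f g : ℂ → Fin (n + 1) → ℂ) (ρ σ : ℂ → ℂ)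
    (hf : ∀ A, Differentiable ℂ fun z => f z A)
    (hg : ∀ A, Differentiable ℂ fun z => g z A)
    (hρ : Differentiable ℂ ρ) (hσ : Differentiable ℂ σ) (z w : ℂ) (l : ℕ) :
    tauF n (fun z A => ρ z * f z A) (fun w A => σ w * g w A) l z w
          = ρ z ^ l * σ w ^ l * tauF n f g l z w := by
  have key : ∀ f g : ℂ → Fin (n + 1) → ℂ, tauF n f g l z w =
      ((Matrix.of fun (i : Fin l) B => Dv n f i z B) *
        (Matrix.of fun (i : Fin l) B => Dv n g i w B).transpose).det := by
    intro f g
    rfl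
  have e1 : (Matrix.of fun (i : Fin l) B => Dv n (fun z A => ρ z * f z A) i z B) =
      leib ρ z l * Matrix.of fun (i : Fin l) B => Dv n f i z B := by
    ext i B
    simp [Matrix.mul_apply, Dv_leib n f ρ hf hρ z B l i]
  have e2 : (Matrix.of fun (i : Fin l) B => Dv n (fun z A => σ z * g z A) i w B) =
      leib σ w l * Matrix.of fun (i : Fin l) B => Dv n g i w B := by
    ext i B
    simp [Matrix.mul_apply, Dv_leib n g σ hg hσ w B l i]
  rw [key, key, e1, e2, Matrix.transpose_mul, Matrix.mul_assoc, Matrix.det_mul,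
    ← Matrix.mul_assoc, Matrix.det_mul, Matrix.det_transpose, leib_det, leib_det]
  ring

/-- Leibniz coefficients, with last row replaced by a unit vector. -/
noncomputable def leibE (σ : ℂ → ℂ) (w : ℂ) (l : ℕ) : Matrix (Fin (l + 1)) (Fin (l + 1)) ℂ :=
  Matrix.of fun i k => if (i : ℕ) < l then leib σ w (l + 1) i k else if i = k then 1 else 0

lemma leibE_det (σ : ℂ → ℂ) (w : ℂ) (l : ℕ) : (leibE σ w l).det = σ w ^ l := by
  rw [Matrix.det_of_lowerTriangular]
  · simp [leibE, leib, Fin.prod_univ_castSucc]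
  · intro i j hij
    have h : (i : ℕ) < j := hij
    have h' : i ≠ j := fun e => by rw [e] at h; omega
    simp [leibE, leib, Nat.choose_eq_zero_of_lt h, h']

lemma vtil_cov (n : ℕ) (f g : ℂ → Fin (n + 1) → ℂ) (ρ σ : ℂ → ℂ)
    (hf : ∀ A, Differentiable ℂ fun z => f z A)
    (hg : ∀ A, Differentiable ℂ fun z => g z A)
    (hρ : Differentiable ℂ ρ) (hσ : Differentiable ℂ σ) (z w : ℂ) (l : ℕ) (A : Fin (n + 1)) :
    vtil n (fun z A => ρ z * f z A) (fun w A => σ w * g w A) l z w A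
            = ρ z ^ (l + 1) * σ w ^ l * vtil n f g l z w A := by
  have key : ∀ f g : ℂ → Fin (n + 1) → ℂ, vtil n f g l z w A =
      ((Matrix.of fun (j : Fin (l + 1)) B =>
          if (j : ℕ) < l then Dv n g j w B else if B = A then 1 else 0) *
        (Matrix.of fun (i : Fin (l + 1)) B => Dv n f i z B).transpose).det := by
    intro f g
    unfold vtil
    congr 1
    ext j i
    simp only [Matrix.mul_apply, Matrix.of_apply, Matrix.transpose_apply]
    split_ifs with h
    · exact Finset.sum_congr rfl fun B _ => mul_comm _ _
    · simp
  have e1 : (Matrix.of fun (i : Fin (l + 1)) B => Dv n (fun z A => ρ z * f z A) i z B) =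
      leib ρ z (l + 1) * Matrix.of fun (i : Fin (l + 1)) B => Dv n f i z B := by
    ext i B
    simp [Matrix.mul_apply, Dv_leib n f ρ hf hρ z B (l + 1) i]
  have e2 : (Matrix.of fun (j : Fin (l + 1)) B =>
          if (j : ℕ) < l then Dv n (fun z A => σ z * g z A) j w B
            else if B = A then (1 : ℂ) else 0) =
      leibE σ w l * Matrix.of fun (j : Fin (l + 1)) B =>
          if (j : ℕ) < l then Dv n g j w B else if B = A then 1 else 0 := by
    ext i B
    simp only [Matrix.mul_apply, Matrix.of_apply, leibE]
    by_cases h : (i : ℕ) < l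
    · simp only [h, if_true]
      rw [Dv_leib n g σ hg hσ w B (l + 1) i]
      refine Finset.sum_congr rfl fun k _ => ?_
      by_cases hk : (k : ℕ) < l
      · simp [hk]
      · have : (i : ℕ) < k := by omega
        simp [leib, Nat.choose_eq_zero_of_lt this]
    · simp only [h, if_false, ite_mul, one_mul, zero_mul, Finset.sum_ite_eq,
        Finset.mem_univ, if_true]
  rw [key, key, e1, e2, Matrix.transpose_mul, Matrix.mul_assoc, Matrix.det_mul,
    ← Matrix.mul_assoc, Matrix.det_mul, Matrix.det_transpose, leib_det, leibE_det]
  ring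

lemma vbar_eq (n : ℕ) (f g : ℂ → Fin (n + 1) → ℂ) (l : ℕ) (z w : ℂ) (A : Fin (n + 1)) :
    vbar n f g l z w A = vtil n g f l w z A := by
  unfold vbar vtil
  simp only [mul_comm]

/-- covariance under local rescaling f̃ = ρ·f, g̃ = σ·g:
τ̃_ℓ = ρ^ℓ σ^ℓ τ_ℓ (0 ≤ ℓ ≤ n+1), ṽ̃_ℓ = ρ^{ℓ+1} σ^ℓ ṽ_ℓ and v̄̃_ℓ = σ^{ℓ+1} ρ^ℓ v̄_ℓ
(0 ≤ ℓ ≤ n). -/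
theorem stmt2 (n : ℕ) (f g : ℂ → Fin (n + 1) → ℂ) (ρ σ : ℂ → ℂ)
    (hf : ∀ A, Differentiable ℂ fun z => f z A)
    (hg : ∀ A, Differentiable ℂ fun z => g z A)
    (hρ : Differentiable ℂ ρ) (hσ : Differentiable ℂ σ) :
    ∀ z w : ℂ,
      (∀ ℓ : ℕ, ℓ ≤ n + 1 →
        tauF n (fun z A => ρ z * f z A) (fun w A => σ w * g w A) ℓ z w
          = ρ z ^ ℓ * σ w ^ ℓ * tauF n f g ℓ z w) ∧
      (∀ ℓ : ℕ, ℓ ≤ n →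
        (∀ A, vtil n (fun z A => ρ z * f z A) (fun w A => σ w * g w A) ℓ z w A
            = ρ z ^ (ℓ + 1) * σ w ^ ℓ * vtil n f g ℓ z w A) ∧
        (∀ A, vbar n (fun z A => ρ z * f z A) (fun w A => σ w * g w A) ℓ z w A
            = σ w ^ (ℓ + 1) * ρ z ^ ℓ * vbar n f g ℓ z w A)) := by
  intro z w
  refine ⟨fun l _ => tau_cov n f g ρ σ hf hg hρ hσ z w l, fun l _ => ⟨fun A =>
    vtil_cov n f g ρ σ hf hg hρ hσ z w l A, fun A => ?_⟩⟩
  rw [vbar_eq, vbar_eq]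
  exact vtil_cov n g f σ ρ hg hf hσ hρ w z l A
end

section
/- Conformally reduced WZNW solutions from W-surfaces (Theorem): suppose Ω ⊆ ℂ × ℂ is open and η(z,w) is invertible for every (z,w) ∈ Ω. Define the currents 𝒥(z,w) = −(∂_z η)(z,w) · η(z,w)⁻¹ and 𝒥̄(z,w) = −η(z,w)⁻¹ · (∂_w η)(z,w), where ∂_z and ∂_w denote entrywise partial derivatives. Then on Ω: (i) ∂_w 𝒥 = 0 and ∂_z 𝒥̄ = 0 (the currents are chiral, so θ = η⁻¹ solves the conformally reduced gl(n+1) WZNW equations ∂_w(θ⁻¹∂_zθ) = ∂_z((∂_wθ)θ⁻¹) = 0); (ii) for every 0 ≤ i ≤ n−1 and 0 ≤ j ≤ n, 𝒥(z,w)_{i j} = −δ_{j, i+1}, and for every 0 ≤ j ≤ n−1 and 0 ≤ k ≤ n, 𝒥̄(z,w)_{k j} = −δ_{k, j+1} (the constrained Drinfeld–Sokolov form of the currents). -/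
open scoped BigOperators

/-- The current 𝒥(z,w) = −(∂_z η)(z,w) · η(z,w)⁻¹. -/
noncomputable def Jcur (n : ℕ) (f g : ℂ → Fin (n + 1) → ℂ) (z w : ℂ) :
    Matrix (Fin (n + 1)) (Fin (n + 1)) ℂ :=
  -(Matrix.of fun i j => deriv (fun t => etaM n f g t w i j) z) * (etaM n f g z w)⁻¹

/-- The current 𝒥̄(z,w) = −η(z,w)⁻¹ · (∂_w η)(z,w). -/
noncomputable def Jbarcur (n : ℕ) (f g : ℂ → Fin (n + 1) → ℂ) (z w : ℂ) :
    Matrix (Fin (n + 1)) (Fin (n + 1)) ℂ :=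
  -((etaM n f g z w)⁻¹ * Matrix.of fun i j => deriv (fun t => etaM n f g z t i j) w)

noncomputable def Fm (n : ℕ) (f : ℂ → Fin (n + 1) → ℂ) (z : ℂ) :
    Matrix (Fin (n + 1)) (Fin (n + 1)) ℂ := Matrix.of fun i A => Dv n f (i : ℕ) z A

noncomputable def Fm1 (n : ℕ) (f : ℂ → Fin (n + 1) → ℂ) (z : ℂ) :
    Matrix (Fin (n + 1)) (Fin (n + 1)) ℂ := Matrix.of fun i A => Dv n f ((i : ℕ) + 1) z A

theorem etaM_eq_Fm (n : ℕ) (f g : ℂ → Fin (n + 1) → ℂ) (z w : ℂ) :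
    etaM n f g z w = Fm n f z * (Fm n g w).transpose := by
  ext i j
  simp [etaM, Fm, Matrix.mul_apply]

theorem hasDerivAt_Dv (n : ℕ) (f : ℂ → Fin (n + 1) → ℂ)
    (hf : ∀ A, Differentiable ℂ fun z => f z A) (i : ℕ) (A : Fin (n + 1)) (z : ℂ) :
    HasDerivAt (fun t => Dv n f i t A) (Dv n f (i + 1) z A) z := by
  have h : Differentiable ℂ (iteratedDeriv i fun t => f t A) :=
    ((hf A).contDiff (n := ⊤)).differentiable_iteratedDeriv i (by exact_mod_cast WithTop.coe_lt_top _)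
  have := (h z).hasDerivAt
  rw [← iteratedDeriv_succ] at this
  exact this

theorem deriv_etaM_left (n : ℕ) (f g : ℂ → Fin (n + 1) → ℂ)
    (hf : ∀ A, Differentiable ℂ fun z => f z A) (z w : ℂ) :
    (Matrix.of fun i j => deriv (fun t => etaM n f g t w i j) z)
      = Fm1 n f z * (Fm n g w).transpose := by
  ext i j
  simp only [etaM, Fm, Fm1, Matrix.mul_apply, Matrix.of_apply, Matrix.transpose_apply]
  exact (HasDerivAt.fun_sum fun A _ => (hasDerivAt_Dv n f hf i A z).mul_const _).deriv

theorem deriv_etaM_right (n : ℕ) (f g : ℂ → Fin (n + 1) → ℂ)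
    (hg : ∀ A, Differentiable ℂ fun z => g z A) (z w : ℂ) :
    (Matrix.of fun i j => deriv (fun t => etaM n f g z t i j) w)
      = Fm n f z * (Fm1 n g w).transpose := by
  ext i j
  simp only [etaM, Fm, Fm1, Matrix.mul_apply, Matrix.of_apply, Matrix.transpose_apply]
  exact (HasDerivAt.fun_sum fun A _ => (hasDerivAt_Dv n g hg j A w).const_mul _).deriv

theorem isUnit_Fm (n : ℕ) (f g : ℂ → Fin (n + 1) → ℂ) (z w : ℂ)
    (h : IsUnit (etaM n f g z w)) : IsUnit (Fm n f z).det ∧ IsUnit (Fm n g w).det := by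
  rw [Matrix.isUnit_iff_isUnit_det, etaM_eq_Fm, Matrix.det_mul, Matrix.det_transpose] at h
  exact IsUnit.mul_iff.1 h

theorem Jcur_eq (n : ℕ) (f g : ℂ → Fin (n + 1) → ℂ)
    (hf : ∀ A, Differentiable ℂ fun z => f z A) (z w : ℂ)
    (h : IsUnit (etaM n f g z w)) : Jcur n f g z w = -(Fm1 n f z * (Fm n f z)⁻¹) := by
  have h2 : IsUnit (Fm n g w).transpose.det := by
    rw [Matrix.det_transpose]; exact (isUnit_Fm n f g z w h).2
  rw [Jcur, deriv_etaM_left n f g hf, etaM_eq_Fm, Matrix.mul_inv_rev, Matrix.neg_mul,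
    Matrix.mul_assoc, Matrix.mul_nonsing_inv_cancel_left _ _ h2]

theorem Jbarcur_eq (n : ℕ) (f g : ℂ → Fin (n + 1) → ℂ)
    (hg : ∀ A, Differentiable ℂ fun z => g z A) (z w : ℂ)
    (h : IsUnit (etaM n f g z w)) :
    Jbarcur n f g z w = -(Fm1 n g w * (Fm n g w)⁻¹).transpose := by
  rw [Jbarcur, deriv_etaM_right n f g hg, etaM_eq_Fm, Matrix.mul_inv_rev, Matrix.mul_assoc,
    Matrix.nonsing_inv_mul_cancel_left _ _ (isUnit_Fm n f g z w h).1, Matrix.transpose_mul,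
    Matrix.transpose_nonsing_inv]

theorem Fm1_mul_inv (n : ℕ) (f : ℂ → Fin (n + 1) → ℂ) (z : ℂ) (h : IsUnit (Fm n f z).det)
    (i j : Fin (n + 1)) (hi : (i : ℕ) < n) :
    (Fm1 n f z * (Fm n f z)⁻¹) i j = if (j : ℕ) = (i : ℕ) + 1 then 1 else 0 := by
  have e : (Fm1 n f z * (Fm n f z)⁻¹) i j
      = (Fm n f z * (Fm n f z)⁻¹) ⟨(i : ℕ) + 1, by omega⟩ j := by
    simp [Matrix.mul_apply, Fm1, Fm]
  rw [e, Matrix.mul_nonsing_inv _ h, Matrix.one_apply]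
  simp only [Fin.ext_iff, eq_comm]

/-- on an open set where η is invertible, the currents are chiral
(∂_w 𝒥 = 0, ∂_z 𝒥̄ = 0) and have the constrained Drinfeld–Sokolov form
𝒥_{i j} = −δ_{j,i+1} (i ≤ n−1) and 𝒥̄_{k j} = −δ_{k,j+1} (j ≤ n−1). -/
theorem stmt3 (n : ℕ) (f g : ℂ → Fin (n + 1) → ℂ)
    (hf : ∀ A, Differentiable ℂ fun z => f z A)
    (hg : ∀ A, Differentiable ℂ fun z => g z A)
    (Ω : Set (ℂ × ℂ)) (hΩ : IsOpen Ω)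
    (hinv : ∀ p ∈ Ω, IsUnit (etaM n f g p.1 p.2)) :
    ∀ p ∈ Ω,
      (∀ i j : Fin (n + 1), deriv (fun t => Jcur n f g p.1 t i j) p.2 = 0) ∧
      (∀ i j : Fin (n + 1), deriv (fun t => Jbarcur n f g t p.2 i j) p.1 = 0) ∧
      (∀ i j : Fin (n + 1), (i : ℕ) < n →
        Jcur n f g p.1 p.2 i j = if (j : ℕ) = (i : ℕ) + 1 then -1 else 0) ∧
      (∀ j k : Fin (n + 1), (j : ℕ) < n →
        Jbarcur n f g p.1 p.2 k j = if (k : ℕ) = (j : ℕ) + 1 then -1 else 0) := by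
  rintro ⟨z, w⟩ hp
  have hu : IsUnit (etaM n f g z w) := hinv (z, w) hp
  have hF := isUnit_Fm n f g z w hu
  refine ⟨fun i j => ?_, fun i j => ?_, fun i j hi => ?_, fun j k hj => ?_⟩
  · have hc : Filter.Tendsto (fun t : ℂ => (z, t)) (nhds w) (nhds (z, w)) :=
      Continuous.tendsto (by fun_prop) w
    have he : (fun t => Jcur n f g z t i j) =ᶠ[nhds w]
        fun _ => (-(Fm1 n f z * (Fm n f z)⁻¹)) i j := by
      have hm := hc.eventually (hΩ.eventually_mem hp)
      filter_upwards [hm] with t ht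
      rw [Jcur_eq n f g hf z t (hinv (z, t) ht)]
    rw [he.deriv_eq]
    simp only [deriv_const]
  · have hc : Filter.Tendsto (fun t : ℂ => (t, w)) (nhds z) (nhds (z, w)) :=
      Continuous.tendsto (by fun_prop) z
    have he : (fun t => Jbarcur n f g t w i j) =ᶠ[nhds z]
        fun _ => (-(Fm1 n g w * (Fm n g w)⁻¹).transpose) i j := by
      have hm := hc.eventually (hΩ.eventually_mem hp)
      filter_upwards [hm] with t ht
      rw [Jbarcur_eq n f g hg t w (hinv (t, w) ht)]
    rw [he.deriv_eq]
    simp only [deriv_const]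
  · rw [Jcur_eq n f g hf z w hu, Matrix.neg_apply, Fm1_mul_inv n f z hF.1 i j hi]
    split_ifs <;> simp
  · rw [Jbarcur_eq n f g hg z w hu, Matrix.neg_apply, Matrix.transpose_apply,
      Fm1_mul_inv n g w hF.2 j k hj]
    split_ifs <;> simp
end

section
/- Second part of the Lemma on the transformations Λ (gauge invariance of the Drinfeld–Sokolov form, Eqs. (2.3.30)–(2.3.33)): with s and I as above, let λ_0, …, λ_n : ℂ → ℂ be differentiable and let λ(z) be the (n+1)×(n+1) matrix whose only possibly nonzero entries are in the bottom row, λ(z)_{n a} = λ_a(z). Then the matrix δ𝒥(z) := s′(z) + s(z)·I − I·s(z) + s(z)·λ(z) − λ(z)·s(z) again has nonzero entries only in the bottom row, and its bottom-row entries are δ𝒥(z)_{n a} = ((n+1) choose a)·ε^{(n+1−a)}(z) − ∑_{b=a+1}^{n} (b choose a)·λ_b(z)·ε^{(b−a)}(z). Hence the form of the Drinfeld–Sokolov current 𝒥 = −I − λ is preserved by the infinitesimal gl(1) gauge transformation generated by s. -/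
open scoped BigOperators

/-- The matrix s(z)_{a b} = C(a,b)·ε^{(a−b)}(z) for b ≤ a, and 0 for b > a. -/
noncomputable def sMat (n : ℕ) (ε : ℂ → ℂ) (z : ℂ) :
    Matrix (Fin (n + 1)) (Fin (n + 1)) ℂ :=
  Matrix.of fun a b =>
    if (b : ℕ) ≤ (a : ℕ) then
      (Nat.choose (a : ℕ) (b : ℕ) : ℂ) * iteratedDeriv ((a : ℕ) - (b : ℕ)) ε z
    else 0

/-- The constant matrix I with I_{j k} = 1 if k = j+1 and 0 otherwise. -/
noncomputable def Imat (n : ℕ) : Matrix (Fin (n + 1)) (Fin (n + 1)) ℂ :=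
  Matrix.of fun j k => if (k : ℕ) = (j : ℕ) + 1 then 1 else 0

/-- Entrywise derivative s′(z) of the matrix-valued function s. -/
noncomputable def sDer (n : ℕ) (ε : ℂ → ℂ) (z : ℂ) :
    Matrix (Fin (n + 1)) (Fin (n + 1)) ℂ :=
  Matrix.of fun a b => deriv (fun t => sMat n ε t a b) z

/-- The matrix λ(z) whose only possibly nonzero entries are in the bottom row,
λ(z)_{n a} = λ_a(z). -/
noncomputable def lamM (n : ℕ) (lam : Fin (n + 1) → ℂ → ℂ) (z : ℂ) :
    Matrix (Fin (n + 1)) (Fin (n + 1)) ℂ :=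
  Matrix.of fun a b => if (a : ℕ) = n then lam b z else 0

theorem aux_der (n : ℕ) (ε : ℂ → ℂ) (hε : Differentiable ℂ ε) (z : ℂ) (a b : Fin (n + 1)) :
    sDer n ε z a b = if (b : ℕ) ≤ (a : ℕ) then
      (Nat.choose (a : ℕ) (b : ℕ) : ℂ) * iteratedDeriv ((a : ℕ) + 1 - (b : ℕ)) ε z else 0 := by
  simp only [sDer, sMat, Matrix.of_apply]
  split_ifs with h
  · have hd : DifferentiableAt ℂ (iteratedDeriv ((a : ℕ) - (b : ℕ)) ε) z :=
      ((hε.contDiff (n := ⊤)).differentiable_iteratedDeriv _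
        (by exact_mod_cast WithTop.coe_lt_top _)) z
    rw [deriv_const_mul _ hd, Nat.sub_add_comm h, iteratedDeriv_succ]
  · simp

theorem aux_sI (n : ℕ) (ε : ℂ → ℂ) (z : ℂ) (a b : Fin (n + 1)) :
    (sMat n ε z * Imat n) a b = if 1 ≤ (b : ℕ) ∧ (b : ℕ) ≤ (a : ℕ) + 1 then
      (Nat.choose (a : ℕ) ((b : ℕ) - 1) : ℂ) * iteratedDeriv ((a : ℕ) + 1 - (b : ℕ)) ε z
      else 0 := by
  rw [Matrix.mul_apply]
  by_cases hb : 1 ≤ (b : ℕ)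
  · rw [Finset.sum_eq_single (⟨(b : ℕ) - 1, by omega⟩ : Fin (n + 1))]
    · have h1 : (b : ℕ) = (b : ℕ) - 1 + 1 := by omega
      have h2 : (a : ℕ) - ((b : ℕ) - 1) = (a : ℕ) + 1 - (b : ℕ) := by omega
      have h3 : ((b : ℕ) - 1 ≤ (a : ℕ)) ↔ (1 ≤ (b : ℕ) ∧ (b : ℕ) ≤ (a : ℕ) + 1) := by omega
      simp only [sMat, Imat, Matrix.of_apply, if_pos h1, h2, h3, mul_one]
    · intro j _ hj
      have : ¬ (b : ℕ) = (j : ℕ) + 1 := fun h => hj (Fin.ext (by simp; omega))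
      simp [Imat, this]
    · simp
  · rw [if_neg (fun h => hb h.1)]
    apply Finset.sum_eq_zero
    intro j _
    have : ¬ (b : ℕ) = (j : ℕ) + 1 := by omega
    simp [Imat, this]

theorem aux_pascal (n : ℕ) (ε : ℂ → ℂ) (hε : Differentiable ℂ ε) (z : ℂ) (a b : Fin (n + 1)) :
    sDer n ε z a b + (sMat n ε z * Imat n) a b = if (b : ℕ) ≤ (a : ℕ) + 1 then
      (Nat.choose ((a : ℕ) + 1) (b : ℕ) : ℂ) * iteratedDeriv ((a : ℕ) + 1 - (b : ℕ)) ε z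
      else 0 := by
  rw [aux_der n ε hε, aux_sI]
  generalize (a : ℕ) = p
  generalize (b : ℕ) = q
  cases q with
  | zero => simp
  | succ q =>
    by_cases h1 : q + 1 ≤ p
    · have h2 : q + 1 ≤ p + 1 := by omega
      simp only [h1, h2, if_true, Nat.choose_succ_succ, Nat.add_sub_cancel]
      simp
      ring
    · by_cases h2 : q ≤ p
      · have : q = p := by omega
        subst this
        simp
      · simp [h1, h2]

theorem aux_Is (n : ℕ) (ε : ℂ → ℂ) (z : ℂ) (a b : Fin (n + 1)) :
    (Imat n * sMat n ε z) a b = if (a : ℕ) < n ∧ (b : ℕ) ≤ (a : ℕ) + 1 then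
      (Nat.choose ((a : ℕ) + 1) (b : ℕ) : ℂ) * iteratedDeriv ((a : ℕ) + 1 - (b : ℕ)) ε z
      else 0 := by
  rw [Matrix.mul_apply]
  by_cases ha : (a : ℕ) < n
  · rw [Finset.sum_eq_single (⟨(a : ℕ) + 1, by omega⟩ : Fin (n + 1))]
    · simp only [sMat, Imat, Matrix.of_apply, ha, true_and, if_true, one_mul]
    · intro j _ hj
      have : ¬ (j : ℕ) = (a : ℕ) + 1 := fun h => hj (Fin.ext h)
      simp [Imat, this]
    · simp
  · rw [if_neg (fun h => ha h.1)]
    apply Finset.sum_eq_zero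
    intro j _
    have : ¬ (j : ℕ) = (a : ℕ) + 1 := by omega
    simp [Imat, this]

theorem aux_sl (n : ℕ) (ε : ℂ → ℂ) (lam : Fin (n + 1) → ℂ → ℂ) (z : ℂ) (a b : Fin (n + 1)) :
    (sMat n ε z * lamM n lam z) a b = if (a : ℕ) < n then 0 else ε z * lam b z := by
  rw [Matrix.mul_apply, Finset.sum_eq_single (Fin.last n)]
  · by_cases ha : (a : ℕ) < n
    · have : ¬ n ≤ (a : ℕ) := by omega
      simp only [sMat, Matrix.of_apply, Fin.val_last, ha, this, if_true, if_false, zero_mul]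
    · have : a = Fin.last n := Fin.ext (by simp; omega)
      simp [sMat, lamM, this]
  · intro j _ hj
    have : ¬ (j : ℕ) = n := fun h => hj (Fin.ext h)
    simp [lamM, this]
  · simp

/-- gauge invariance of the Drinfeld–Sokolov form (Eqs. 2.3.30–2.3.33):
δ𝒥 = s′ + s·I − I·s + s·λ − λ·s has nonzero entries only in the bottom row, with
δ𝒥_{n a} = C(n+1,a)·ε^{(n+1−a)} − ∑_{b=a+1}^{n} C(b,a)·λ_b·ε^{(b−a)}. -/
theorem stmt7 (n : ℕ) (ε : ℂ → ℂ) (hε : Differentiable ℂ ε)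
    (lam : Fin (n + 1) → ℂ → ℂ) (hlam : ∀ b, Differentiable ℂ (lam b)) :
    ∀ z : ℂ,
      (∀ a b : Fin (n + 1), (a : ℕ) < n →
        (sDer n ε z + sMat n ε z * Imat n - Imat n * sMat n ε z
          + sMat n ε z * lamM n lam z - lamM n lam z * sMat n ε z) a b = 0) ∧
      (∀ a : Fin (n + 1),
        (sDer n ε z + sMat n ε z * Imat n - Imat n * sMat n ε z
          + sMat n ε z * lamM n lam z - lamM n lam z * sMat n ε z) (Fin.last n) a
          = (Nat.choose (n + 1) (a : ℕ) : ℂ) * iteratedDeriv (n + 1 - (a : ℕ)) ε z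
            - ∑ b : Fin (n + 1),
                if (a : ℕ) < (b : ℕ) then
                  (Nat.choose (b : ℕ) (a : ℕ) : ℂ) * lam b z
                    * iteratedDeriv ((b : ℕ) - (a : ℕ)) ε z
                else 0) := by
  intro z
  refine ⟨fun a b ha => ?_, fun a => ?_⟩
  · rw [Matrix.sub_apply, Matrix.add_apply, Matrix.sub_apply, Matrix.add_apply,
      aux_pascal n ε hε, aux_Is, aux_sl, Matrix.mul_apply]
    have : ¬ (a : ℕ) = n := by omega
    simp [ha, lamM, this]
  · rw [Matrix.sub_apply, Matrix.add_apply, Matrix.sub_apply, Matrix.add_apply,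
      aux_pascal n ε hε, aux_Is, aux_sl, Matrix.mul_apply]
    have h1 : (a : ℕ) ≤ n + 1 := by omega
    have key : ∑ j, lamM n lam z (Fin.last n) j * sMat n ε z j a
        = ε z * lam a z + ∑ b : Fin (n + 1),
                if (a : ℕ) < (b : ℕ) then
                  (Nat.choose (b : ℕ) (a : ℕ) : ℂ) * lam b z
                    * iteratedDeriv ((b : ℕ) - (a : ℕ)) ε z
                else 0 := by
      have e : ε z * lam a z = ∑ b : Fin (n + 1), if b = a then ε z * lam a z else 0 := by simp
      rw [e, ← Finset.sum_add_distrib]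
      refine Finset.sum_congr rfl fun b _ => ?_
      simp only [lamM, sMat, Matrix.of_apply, Fin.val_last, if_true]
      rcases lt_trichotomy (a : ℕ) (b : ℕ) with h | h | h
      · have h2 : b ≠ a := fun h3 => by simp [h3] at h
        simp only [h, h.le, h2, if_true, if_false]
        ring
      · have h2 : b = a := Fin.ext h.symm
        subst h2
        simp [mul_comm]
      · have h2 : b ≠ a := fun h3 => by simp [h3] at h
        have h3 : ¬ (a : ℕ) ≤ b := by omega
        have h4 : ¬ (a : ℕ) < b := by omega
        simp only [h3, h4, h2, if_false]
        ring
    rw [key]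
    simp only [Fin.val_last, h1, lt_irrefl, false_and, if_true, if_false]
    ring
end

section
/- Gauss–Codazzi equations coincide with the A_n Toda equations (Theorems 'Gauss-Codazzi equations' and 'Toda equations', in bilinear form): for every 1 ≤ ℓ ≤ n and all z, w ∈ ℂ, τ_ℓ(z,w) · ∂_z∂_w τ_ℓ(z,w) − (∂_z τ_ℓ(z,w)) · (∂_w τ_ℓ(z,w)) = τ_{ℓ+1}(z,w) · τ_{ℓ−1}(z,w). Equivalently, wherever the τ's are nonvanishing, the fields Φ_ℓ = −ln τ_ℓ satisfy the Toda equations ∂_z∂_w Φ_ℓ = −exp(2Φ_ℓ − Φ_{ℓ−1} − Φ_{ℓ+1}). -/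
open scoped BigOperators

open Matrix in
lemma dj_inv {m : ℕ} (A : Matrix (Fin m) (Fin m) ℂ) (B : Matrix (Fin m) (Fin 2) ℂ)
    (C : Matrix (Fin 2) (Fin m) ℂ) (D : Matrix (Fin 2) (Fin 2) ℂ) (hA : A.det ≠ 0)
    (d : Fin 2 → Fin 2 → ℂ)
    (hd : d = fun i j => (fromBlocks A (B.submatrix id (fun _ : Fin 1 => j))
      (C.submatrix (fun _ : Fin 1 => i) id) (D.submatrix (fun _ => i) (fun _ => j))).det) :
    (fromBlocks A B C D).det * A.det = d 0 0 * d 1 1 - d 0 1 * d 1 0 := by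
  letI : Invertible A := A.invertibleOfIsUnitDet (isUnit_iff_ne_zero.mpr hA)
  have hd' : ∀ i j, d i j = A.det * (D - C * ⅟A * B) i j := by
    intro i j
    rw [hd]
    simp only
    rw [det_fromBlocks₁₁, det_fin_one]
    rfl
  rw [det_fromBlocks₁₁, det_fin_two]
  simp only [hd']
  ring

open Matrix in
lemma dj {m : ℕ} (A : Matrix (Fin m) (Fin m) ℂ) (B : Matrix (Fin m) (Fin 2) ℂ)
    (C : Matrix (Fin 2) (Fin m) ℂ) (D : Matrix (Fin 2) (Fin 2) ℂ)
    (d : Matrix (Fin m) (Fin m) ℂ → Fin 2 → Fin 2 → ℂ)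
    (hd : d = fun A i j => (fromBlocks A (B.submatrix id (fun _ : Fin 1 => j))
      (C.submatrix (fun _ : Fin 1 => i) id) (D.submatrix (fun _ => i) (fun _ => j))).det) :
    (fromBlocks A B C D).det * A.det = d A 0 0 * d A 1 1 - d A 0 1 * d A 1 0 := by
  let At : ℂ → Matrix (Fin m) (Fin m) ℂ := fun t => Matrix.scalar (Fin m) t - A
  have hAt : Continuous fun t : ℂ => -At t := by
    refine (Continuous.sub ?_ continuous_const).neg
    change Continuous fun t : ℂ => Matrix.diagonal fun _ : Fin m => t
    exact Continuous.matrix_diagonal (continuous_pi fun _ => continuous_id)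
  have hdense : Dense {t : ℂ | A.charpoly.IsRoot t}ᶜ :=
    (Polynomial.finite_setOfPred_isRoot (charpoly_monic A).ne_zero).countable.dense_compl ℂ
  have hc : ∀ i j, Continuous fun t => d (-At t) i j := by
    intro i j
    rw [hd]
    exact (hAt.matrix_fromBlocks continuous_const continuous_const continuous_const).matrix_det
  have h1 : Continuous fun t => (fromBlocks (-At t) B C D).det * (-At t).det :=
    (hAt.matrix_fromBlocks continuous_const continuous_const continuous_const).matrix_det.mul
      hAt.matrix_det
  have h2 : Continuous fun t =>
      d (-At t) 0 0 * d (-At t) 1 1 - d (-At t) 0 1 * d (-At t) 1 0 := by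
    exact ((hc 0 0).mul (hc 1 1)).sub ((hc 0 1).mul (hc 1 0))
  have key := Continuous.ext_on hdense h1 h2 (by
    intro t ht
    refine dj_inv (-At t) B C D ?_ (d (-At t)) (by rw [hd])
    have h3 : (At t).det ≠ 0 := by
      intro h
      apply ht
      simp only [Set.mem_ofPred_eq, Polynomial.IsRoot, eval_charpoly]
      exact h
    rw [det_neg]
    exact mul_ne_zero (pow_ne_zero _ (by norm_num)) h3)
  have := congrFun key 0
  simpa [At] using this

/-- index shift: last index moved up -/
def lsh (m i : ℕ) : ℕ := if i = m then m + 1 else i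

open Matrix in
lemma det_blk (k m : ℕ) (h : ℕ → ℕ → ℂ) (r c : ℕ → ℕ)
    (hr : ∀ i < m, r i = i) (hc : ∀ i < m, c i = i) :
    (of fun i j : Fin (m + k) => h (r i) (c j)).det =
     (fromBlocks (of fun i j : Fin m => h i j) (of fun (i : Fin m) (j : Fin k) => h i (c (m + j)))
      (of fun (i : Fin k) (j : Fin m) => h (r (m + i)) j)
      (of fun (i : Fin k) (j : Fin k) => h (r (m + i)) (c (m + j)))).det := by
  rw [← det_submatrix_equiv_self (finSumFinEquiv (m := m) (n := k))]
  congr 1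
  ext i j
  rcases i with i | i <;> rcases j with j | j <;> simp [hr, hc]

open Matrix in
lemma dj_nat (m : ℕ) (h : ℕ → ℕ → ℂ) :
    (of fun i j : Fin (m + 2) => h i j).det * (of fun i j : Fin m => h i j).det =
    (of fun i j : Fin (m + 1) => h i j).det *
      (of fun i j : Fin (m + 1) => h (lsh m i) (lsh m j)).det -
    (of fun i j : Fin (m + 1) => h i (lsh m j)).det *
      (of fun i j : Fin (m + 1) => h (lsh m i) j).det := by
  have hl : ∀ i < m, lsh m i = i := fun i hi => by simp [lsh, hi.ne]
  have hlm : lsh m m = m + 1 := by simp [lsh]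
  have hi : ∀ i < m, id i = i := fun _ _ => rfl
  have e := det_blk 2 m h id id hi hi
  have e00 := det_blk 1 m h id id hi hi
  have e01 := det_blk 1 m h id (lsh m) hi hl
  have e10 := det_blk 1 m h (lsh m) id hl hi
  have e11 := det_blk 1 m h (lsh m) (lsh m) hl hl
  simp only [id] at e e00 e01 e10
  rw [e, e00, e01, e10, e11, dj _ _ _ _ _ rfl]
  have h1 : ∀ i : Fin 1, (i : ℕ) = 0 := fun i => by omega
  simp only [h1, Nat.add_zero, hlm]
  rfl

open Matrix in
lemma det_rows_deriv (m : ℕ) (a : ℕ → Fin (m + 1) → ℂ → ℂ) (z : ℂ)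
    (ha : ∀ i j, HasDerivAt (a i j) (a (i + 1) j z) z) :
    HasDerivAt (fun z => (of fun i j : Fin (m + 1) => a i j z).det)
      (of fun i j : Fin (m + 1) => a (lsh m i) j z).det z := by
  have h1 : HasDerivAt (fun z => (of fun i j : Fin (m + 1) => a i j z).det)
      (∑ k : Fin (m + 1), ((of fun i j : Fin (m + 1) => a i j z).updateRow k
        (fun j => a (k + 1) j z)).det) z := by
    simp only [← det_transpose (of fun i j : Fin (m + 1) => a i j _),
      ← det_transpose (updateRow _ _ _), det_apply', transpose_apply, of_apply]
    rw [Finset.sum_comm]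
    refine HasDerivAt.fun_sum fun σ _ => ?_
    rw [← Finset.mul_sum]
    refine HasDerivAt.const_mul _ ?_
    have := HasDerivAt.fun_finsetProd (u := Finset.univ) (x := z)
      (f := fun (i : Fin (m + 1)) z => a i (σ i) z) (f' := fun i => a (i + 1) (σ i) z)
      (fun i _ => ha _ _)
    refine this.congr_deriv (Finset.sum_congr rfl fun k _ => ?_)
    rw [← Finset.mul_prod_erase Finset.univ _ (Finset.mem_univ k), smul_eq_mul, mul_comm]
    congr 1
    · simp
    · refine Finset.prod_congr rfl fun i hi => ?_
      rw [updateRow_ne (Finset.ne_of_mem_erase hi)]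
      rfl
  refine h1.congr_deriv ?_
  rw [Finset.sum_eq_single (Fin.last m)]
  · congr 1
    ext i j
    by_cases hi : i = Fin.last m
    · subst hi; simp [lsh]
    · have : (i : ℕ) ≠ m := fun h => hi (Fin.ext h)
      simp [updateRow_ne hi, lsh, this]
  · intro k _ hk
    have hk' : (k : ℕ) < m := by
      have := k.2
      have : (k : ℕ) ≠ m := fun h => hk (Fin.ext h)
      omega
    let k' : Fin (m + 1) := ⟨k + 1, by omega⟩
    have hne : k' ≠ k := by simp [k', Fin.ext_iff]
    refine det_zero_of_row_eq hne ?_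
    rw [updateRow_ne hne, updateRow_self]
    rfl
  · simp

open Matrix in
lemma det_cols_deriv (m : ℕ) (a : Fin (m + 1) → ℕ → ℂ → ℂ) (z : ℂ)
    (ha : ∀ i j, HasDerivAt (a i j) (a i (j + 1) z) z) :
    HasDerivAt (fun z => (of fun i j : Fin (m + 1) => a i j z).det)
      (of fun i j : Fin (m + 1) => a i (lsh m j) z).det z := by
  have := det_rows_deriv m (fun i j z => a j i z) z (fun i j => ha j i)
  convert! this using 1
  · funext z
    rw [← det_transpose]; rfl
  · rw [← det_transpose]; rfl

lemma Dv_deriv (n : ℕ) (f : ℂ → Fin (n + 1) → ℂ)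
    (hf : ∀ A, Differentiable ℂ fun z => f z A) (i : ℕ) (z : ℂ) (A : Fin (n + 1)) :
    HasDerivAt (fun z => Dv n f i z A) (Dv n f (i + 1) z A) z := by
  unfold Dv
  rw [iteratedDeriv_succ]
  have hc : ContDiff ℂ ⊤ (fun z => f z A) := (hf A).contDiff
  exact ((hc.differentiable_iteratedDeriv i (by exact_mod_cast WithTop.coe_lt_top _)) z).hasDerivAt

/-- Gauss–Codazzi = A_n Toda equations, in bilinear (Hirota) form:
τ_ℓ·∂_z∂_w τ_ℓ − ∂_z τ_ℓ·∂_w τ_ℓ = τ_{ℓ+1}·τ_{ℓ−1} for 1 ≤ ℓ ≤ n. -/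
theorem stmt8 (n : ℕ) (f g : ℂ → Fin (n + 1) → ℂ)
    (hf : ∀ A, Differentiable ℂ fun z => f z A)
    (hg : ∀ A, Differentiable ℂ fun z => g z A) :
    ∀ ℓ : ℕ, 1 ≤ ℓ → ℓ ≤ n → ∀ z w : ℂ,
      tauF n f g ℓ z w * deriv (fun z' => deriv (fun w' => tauF n f g ℓ z' w') w) z
        - deriv (fun z' => tauF n f g ℓ z' w) z * deriv (fun w' => tauF n f g ℓ z w') w
        = tauF n f g (ℓ + 1) z w * tauF n f g (ℓ - 1) z w := by
  intro ℓ h1 _ z w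
  obtain ⟨m, rfl⟩ : ∃ m, ℓ = m + 1 := ⟨ℓ - 1, by omega⟩
  have hz : ∀ i j z w, HasDerivAt (fun z => ∑ A, Dv n f i z A * Dv n g j w A)
      (∑ A, Dv n f (i + 1) z A * Dv n g j w A) z := fun i j z w =>
    HasDerivAt.fun_sum fun A _ => (Dv_deriv n f hf i z A).mul_const _
  have hw : ∀ i j z w, HasDerivAt (fun w => ∑ A, Dv n f i z A * Dv n g j w A)
      (∑ A, Dv n f i z A * Dv n g (j + 1) w A) w := fun i j z w =>
    HasDerivAt.fun_sum fun A _ => (Dv_deriv n g hg j w A).const_mul _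
  have dw : ∀ z, deriv (fun w' => tauF n f g (m + 1) z w') w = _ := fun z =>
    (det_cols_deriv m (fun i j w => ∑ A, Dv n f i z A * Dv n g j w A) w
      (fun i j => hw i j z w)).deriv
  have dz : deriv (fun z' => tauF n f g (m + 1) z' w) z = _ :=
    (det_rows_deriv m (fun i j z => ∑ A, Dv n f i z A * Dv n g j w A) z
      (fun i j => hz i j z w)).deriv
  simp only [dw]
  have dzw := (det_rows_deriv m (fun i j z => ∑ A, Dv n f i z A * Dv n g (lsh m j) w A) z
      (fun i j => hz i (lsh m j) z w)).deriv
  rw [dz, dzw]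
  have := dj_nat m (fun i j => ∑ A, Dv n f i z A * Dv n g j w A)
  rw [show m + 1 - 1 = m from rfl]
  simp only [tauF]
  refine Eq.trans ?_ this.symm
  ring
end

section
/- Frenet–Serret formulae for CP^n in denominator-free form (Proposition 'Frenet-Serret formulae for CP^n'): for every 0 ≤ ℓ ≤ n and all z, w ∈ ℂ, the vectors ṽ_ℓ satisfy τ_{ℓ+1}(z,w) · ∂_z ṽ_ℓ(z,w) = (∂_z τ_{ℓ+1}(z,w)) · ṽ_ℓ(z,w) + τ_ℓ(z,w) · ṽ_{ℓ+1}(z,w) and τ_ℓ(z,w) · ∂_w ṽ_ℓ(z,w) = (∂_w τ_ℓ(z,w)) · ṽ_ℓ(z,w) − τ_{ℓ+1}(z,w) · ṽ_{ℓ−1}(z,w), where ∂_z, ∂_w act componentwise and ṽ_{−1} = ṽ_{n+1} = 0; the mirror identities hold for v̄_ℓ with the roles of z and w interchanged: τ_{ℓ+1}·∂_w v̄_ℓ = (∂_w τ_{ℓ+1})·v̄_ℓ + τ_ℓ·v̄_{ℓ+1} and τ_ℓ·∂_z v̄_ℓ = (∂_z τ_ℓ)·v̄_ℓ − τ_{ℓ+1}·v̄_{ℓ−1}.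 (Dividing by √(τ_ℓτ_{ℓ+1}) these are the Frenet–Serret equations for the orthonormal moving frame ẽ_ℓ = ṽ_ℓ/√(τ_ℓτ_{ℓ+1}).) -/
open scoped BigOperators

noncomputable def FS1 (k : ℕ) (E : ℕ → ℕ → ℂ) (a : ℕ → ℂ) (x : ℕ) : ℂ :=
  Matrix.det (Matrix.of fun j i : Fin (k + 1) =>
    (if (j : ℕ) < k then E j else a) (if (i : ℕ) < k then (i : ℕ) else x))

noncomputable def FS2 (k : ℕ) (E : ℕ → ℕ → ℂ) (a b : ℕ → ℂ) (x y : ℕ) : ℂ :=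
  Matrix.det (Matrix.of fun j i : Fin (k + 2) =>
    (if (j : ℕ) < k then E j else if (j : ℕ) = k then a else b)
      (if (i : ℕ) < k then (i : ℕ) else if (i : ℕ) = k then x else y))

noncomputable def FS0 (k : ℕ) (E : ℕ → ℕ → ℂ) : ℂ :=
  Matrix.det (Matrix.of fun j i : Fin k => E j i)

lemma FS_schur (k : ℕ) (E : ℕ → ℕ → ℂ) (h : FS0 k E ≠ 0) :
    ∃ s : (ℕ → ℂ) → ℕ → ℂ, (∀ a x, FS1 k E a x = FS0 k E * s a x) ∧
      ∀ a b x y, FS2 k E a b x y = FS0 k E * (s a x * s b y - s a y * s b x) := by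
  set K : Matrix (Fin k) (Fin k) ℂ := Matrix.of fun j i : Fin k => E j i with hK
  have hu : IsUnit K.det := isUnit_iff_ne_zero.2 h
  let _ := K.invertibleOfIsUnitDet hu
  refine ⟨fun a x => a x - ∑ p : Fin k, (∑ q : Fin k, a q * (⅟K) q p) * E p x, ?_, ?_⟩
  · intro a x
    have h1 : FS1 k E a x = Matrix.det (Matrix.fromBlocks K (Matrix.of fun p (_ : Fin 1) => E p x)
        (Matrix.of fun (_ : Fin 1) q => a q) (Matrix.of fun (_ _ : Fin 1) => a x)) := by
      unfold FS1
      rw [← Matrix.det_submatrix_equiv_self (finSumFinEquiv : Fin k ⊕ Fin 1 ≃ Fin (k + 1))]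
      congr 1
      ext i j
      rcases i with i | i <;> rcases j with j | j <;> simp [hK]
    rw [h1, Matrix.det_fromBlocks₁₁, Matrix.det_fin_one]
    simp [Matrix.mul_apply, FS0, hK]
  · intro a b x y
    have h1 : FS2 k E a b x y = Matrix.det (Matrix.fromBlocks K
        (Matrix.of fun p (i : Fin 2) => E p (![x, y] i))
        (Matrix.of fun (i : Fin 2) q => (![a, b] i) q)
        (Matrix.of fun (i j : Fin 2) => (![a, b] i) (![x, y] j))) := by
      unfold FS2
      rw [← Matrix.det_submatrix_equiv_self (finSumFinEquiv : Fin k ⊕ Fin 2 ≃ Fin (k + 2))]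
      congr 1
      ext i j
      rcases i with i | i <;> rcases j with j | j
      · simp [hK]
      · fin_cases j <;> simp
      · fin_cases i <;> simp
      · fin_cases i <;> fin_cases j <;> simp
    rw [h1, Matrix.det_fromBlocks₁₁, Matrix.det_fin_two]
    simp [Matrix.mul_apply, FS0, hK]

noncomputable def FSp (E : ℕ → ℕ → ℂ) (t : ℂ) : ℕ → ℕ → ℂ :=
  fun j i => E j i + if j = i then t else 0

lemma FSp_zero (E : ℕ → ℕ → ℂ) : FSp E 0 = E := by
  funext j i; simp [FSp]

lemma FSp_dense (k : ℕ) (E : ℕ → ℕ → ℂ) : Dense {t : ℂ | FS0 k (FSp E t) ≠ 0} := by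
  have hfin : {t : ℂ | FS0 k (FSp E t) = 0}.Finite := by
    set K : Matrix (Fin k) (Fin k) ℂ := Matrix.of fun j i : Fin k => E j i with hK
    refine ((-K).charpoly.roots.toFinset.finite_toSet).subset ?_
    intro t ht
    have hne : (-K).charpoly ≠ 0 := (Matrix.charpoly_monic _).ne_zero
    simp only [Finset.mem_coe, Multiset.mem_toFinset, Polynomial.mem_roots hne,
      Polynomial.IsRoot.def, Matrix.eval_charpoly]
    rw [← show FS0 k (FSp E t) = 0 from ht]
    unfold FS0
    congr 1
    ext i j
    by_cases hij : i = j
    · subst hij; simp [FSp, hK, add_comm]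
    · have : (i : ℕ) ≠ j := fun h => hij (Fin.ext h)
      simp [FSp, hK, hij, this]
  have := hfin.countable.dense_compl ℂ
  simpa [Set.compl_def] using this

lemma FS_extend (k : ℕ) (E : ℕ → ℕ → ℂ) (F G : (ℕ → ℕ → ℂ) → ℂ)
    (hF : Continuous fun t => F (FSp E t)) (hG : Continuous fun t => G (FSp E t))
    (h : ∀ E', FS0 k E' ≠ 0 → F E' = G E') : F E = G E := by
  have := Continuous.ext_on (FSp_dense k E) hF hG (fun t ht => h _ ht)
  have := congrFun this 0
  simpa [FSp_zero] using this

lemma FSp_cont (E : ℕ → ℕ → ℂ) (j i : ℕ) : Continuous fun t => FSp E t j i := by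
  unfold FSp
  split_ifs <;> fun_prop

lemma FS0_cont (k : ℕ) (E : ℕ → ℕ → ℂ) : Continuous fun t => FS0 k (FSp E t) := by
  refine Continuous.matrix_det (continuous_matrix fun i j => FSp_cont _ _ _)

lemma FS1_cont (k : ℕ) (E : ℕ → ℕ → ℂ) (a x) : Continuous fun t => FS1 k (FSp E t) a x := by
  refine Continuous.matrix_det (continuous_matrix fun i j => ?_)
  dsimp
  split_ifs <;> first | exact FSp_cont _ _ _ | exact continuous_const

lemma FS2_cont (k : ℕ) (E : ℕ → ℕ → ℂ) (a b x y) :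
    Continuous fun t => FS2 k (FSp E t) a b x y := by
  refine Continuous.matrix_det (continuous_matrix fun i j => ?_)
  dsimp
  split_ifs <;> first | exact FSp_cont _ _ _ | exact continuous_const

lemma FS_dodgson (k : ℕ) (E : ℕ → ℕ → ℂ) (a b : ℕ → ℂ) (x y : ℕ) :
    FS1 k E a x * FS1 k E b y = FS1 k E a y * FS1 k E b x + FS0 k E * FS2 k E a b x y := by
  refine FS_extend k E (fun E => FS1 k E a x * FS1 k E b y)
    (fun E => FS1 k E a y * FS1 k E b x + FS0 k E * FS2 k E a b x y)
    ((FS1_cont ..).mul (FS1_cont ..))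
    (((FS1_cont ..).mul (FS1_cont ..)).add ((FS0_cont ..).mul (FS2_cont ..))) ?_
  intro E' h
  obtain ⟨s, h1, h2⟩ := FS_schur k E' h
  simp only [h1, h2]; ring

lemma FS_plucker (k : ℕ) (E : ℕ → ℕ → ℂ) (a b c : ℕ → ℂ) (x y : ℕ) :
    FS1 k E a x * FS2 k E b c x y
      = FS1 k E b x * FS2 k E a c x y - FS2 k E a b x y * FS1 k E c x := by
  refine FS_extend k E (fun E => FS1 k E a x * FS2 k E b c x y)
    (fun E => FS1 k E b x * FS2 k E a c x y - FS2 k E a b x y * FS1 k E c x)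
    ((FS1_cont ..).mul (FS2_cont ..))
    (((FS1_cont ..).mul (FS2_cont ..)).sub ((FS2_cont ..).mul (FS1_cont ..))) ?_
  intro E' h
  obtain ⟨s, h1, h2⟩ := FS_schur k E' h
  simp only [h1, h2]; ring

lemma FS_deriv {m : ℕ} (M : Fin m → Fin m → ℂ → ℂ) (M' : Fin m → Fin m → ℂ) (z : ℂ)
    (h : ∀ i j, HasDerivAt (M i j) (M' i j) z) :
    HasDerivAt (fun t => Matrix.det (Matrix.of fun i j => M i j t))
      (∑ i, Matrix.det ((Matrix.of fun i j => M i j z).updateRow i (M' i))) z := by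
  have h1 : ∀ t, Matrix.det (Matrix.of fun i j => M i j t)
      = ∑ σ : Equiv.Perm (Fin m), (Equiv.Perm.sign σ : ℤ) * ∏ i, M i (σ i) t := by
    intro t
    rw [← Matrix.det_transpose, Matrix.det_apply']; rfl
  simp only [h1]
  have h2 : ∑ i, Matrix.det ((Matrix.of fun i j => M i j z).updateRow i (M' i))
      = ∑ σ : Equiv.Perm (Fin m), (Equiv.Perm.sign σ : ℤ) *
        ∑ i, (∏ j ∈ Finset.univ.erase i, M j (σ j) z) • M' i (σ i) := by
    simp only [Finset.mul_sum]
    rw [Finset.sum_comm]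
    refine Finset.sum_congr rfl fun i _ => ?_
    rw [← Matrix.det_transpose, Matrix.det_apply']
    refine Finset.sum_congr rfl fun σ _ => ?_
    congr 1
    rw [← Finset.mul_prod_erase _ _ (Finset.mem_univ i)]
    simp only [Matrix.transpose_apply, Matrix.updateRow_self, smul_eq_mul]
    rw [mul_comm]
    congr 1
    refine Finset.prod_congr rfl fun j hj => ?_
    rw [Matrix.updateRow_ne (Finset.ne_of_mem_erase hj)]; rfl
  rw [h2]
  refine HasDerivAt.fun_sum fun σ _ => HasDerivAt.const_mul _ ?_
  exact HasDerivAt.fun_finsetProd fun i _ => h i (σ i)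

lemma FS_deriv_one {m : ℕ} (M : Fin m → Fin m → ℂ → ℂ) (M' : Fin m → Fin m → ℂ) (z : ℂ)
    (h : ∀ i j, HasDerivAt (M i j) (M' i j) z) (i₀ : Fin m)
    (h0 : ∀ i, i ≠ i₀ → (∀ j, M' i j = 0) ∨ ∃ i', i' ≠ i ∧ ∀ j, M' i j = M i' j z) :
    deriv (fun t => Matrix.det (Matrix.of fun i j => M i j t)) z
      = Matrix.det (Matrix.of fun i j => if i = i₀ then M' i₀ j else M i j z) := by
  rw [(FS_deriv M M' z h).deriv, Finset.sum_eq_single i₀]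
  · congr 1
    ext i j
    rw [Matrix.updateRow_apply]; rfl
  · intro i _ hi
    rcases h0 i hi with h | ⟨i', hne, h⟩
    · refine Matrix.det_eq_zero_of_row_eq_zero i fun j => ?_
      rw [Matrix.updateRow_self]; exact h j
    · refine Matrix.det_zero_of_row_eq hne.symm ?_
      rw [Matrix.updateRow_self, Matrix.updateRow_ne hne]
      funext j; exact h j
  · simp

noncomputable def FSE (n : ℕ) (f g : ℂ → Fin (n + 1) → ℂ) (z w : ℂ) : ℕ → ℕ → ℂ :=
  fun j i => ∑ B, Dv n f i z B * Dv n g j w B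

lemma Dv_hasDeriv (n : ℕ) (f : ℂ → Fin (n + 1) → ℂ)
    (hf : ∀ A, Differentiable ℂ fun z => f z A) (i : ℕ) (z : ℂ) (A : Fin (n + 1)) :
    HasDerivAt (fun t => Dv n f i t A) (Dv n f (i + 1) z A) z := by
  unfold Dv
  rw [iteratedDeriv_succ]
  have hc : ContDiff ℂ (⊤ : ℕ∞) (fun t => f t A) := (hf A).contDiff
  have := hc.differentiable_iteratedDeriv i (by exact_mod_cast WithTop.coe_lt_top i)
  exact (this z).hasDerivAt

lemma FSE_dz (n : ℕ) (f g : ℂ → Fin (n + 1) → ℂ)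
    (hf : ∀ A, Differentiable ℂ fun z => f z A) (j i : ℕ) (z w : ℂ) :
    HasDerivAt (fun t => FSE n f g t w j i) (FSE n f g z w j (i + 1)) z := by
  unfold FSE
  exact HasDerivAt.fun_sum fun B _ => (Dv_hasDeriv n f hf i z B).mul_const _

lemma FSE_dw (n : ℕ) (f g : ℂ → Fin (n + 1) → ℂ)
    (hg : ∀ A, Differentiable ℂ fun z => g z A) (j i : ℕ) (z w : ℂ) :
    HasDerivAt (fun t => FSE n f g z t j i) (FSE n f g z w (j + 1) i) w := by
  unfold FSE
  exact HasDerivAt.fun_sum fun B _ => (Dv_hasDeriv n g hg j w B).const_mul _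

section
variable (n : ℕ) (f g : ℂ → Fin (n + 1) → ℂ) (z w : ℂ) (A : Fin (n + 1))

lemma tauF_eq0 (k : ℕ) : tauF n f g k z w = FS0 k (FSE n f g z w) := by
  unfold tauF FS0
  rw [← Matrix.det_transpose]; rfl

lemma FS0_succ (k : ℕ) (E : ℕ → ℕ → ℂ) : FS0 (k + 1) E = FS1 k E (E k) k := by
  unfold FS0 FS1
  congr 1
  ext j i
  have h1 : (if (j : ℕ) < k then E j else E k) = E j := by
    split_ifs with h
    · rfl
    · rw [show (j : ℕ) = k by omega]
  have h2 : (if (i : ℕ) < k then (i : ℕ) else k) = i := by split_ifs <;> omega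
  simp only [Matrix.of_apply, h1, h2]

lemma FS1_succ (k : ℕ) (E : ℕ → ℕ → ℂ) (a : ℕ → ℂ) :
    FS1 (k + 1) E a (k + 1) = FS2 k E (E k) a k (k + 1) := by
  unfold FS1 FS2
  congr 1
  ext j i
  have h1 : (if (j : ℕ) < k + 1 then E j else a)
      = if (j : ℕ) < k then E j else if (j : ℕ) = k then E k else a := by
    split_ifs with h h' h'' <;> first | rfl | omega | congr 1
  have h2 : (if (i : ℕ) < k + 1 then (i : ℕ) else k + 1)
      = if (i : ℕ) < k then (i : ℕ) else if (i : ℕ) = k then k else k + 1 := by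
    split_ifs <;> omega
  simp only [Matrix.of_apply, h1, h2]

lemma vtil_eq1 (k : ℕ) :
    vtil n f g k z w A = FS1 k (FSE n f g z w) (fun i => Dv n f i z A) k := by
  unfold vtil FS1
  congr 1
  ext j i
  have h2 : (if (i : ℕ) < k then (i : ℕ) else k) = i := by split_ifs <;> omega
  simp only [Matrix.of_apply, h2]
  split_ifs <;> rfl

lemma FS1_dz (k : ℕ) (E : ℂ → ℕ → ℕ → ℂ) (a : ℂ → ℕ → ℂ)
    (hE : ∀ j i, HasDerivAt (fun t => E t j i) (E z j (i + 1)) z)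
    (ha : ∀ i, HasDerivAt (fun t => a t i) (a z (i + 1)) z) :
    deriv (fun t => FS1 k (E t) (a t) k) z = FS1 k (E z) (a z) (k + 1) := by
  have h1 : ∀ t, FS1 k (E t) (a t) k = Matrix.det (Matrix.of fun i j : Fin (k + 1) =>
      (if (j : ℕ) < k then E t j else a t) i) := by
    intro t
    unfold FS1
    rw [← Matrix.det_transpose]
    congr 1
    ext i j
    have h2 : (if (i : ℕ) < k then (i : ℕ) else k) = i := by split_ifs <;> omega
    simp only [Matrix.transpose_apply, Matrix.of_apply, h2]
  simp only [h1]
  rw [FS_deriv_one (fun (i j : Fin (k + 1)) t => (if (j : ℕ) < k then E t j else a t) i)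
    (fun i j => (if (j : ℕ) < k then E z j else a z) ((i : ℕ) + 1)) z ?_ (Fin.last k) ?_]
  · unfold FS1
    rw [← Matrix.det_transpose]
    congr 1
    ext j i
    simp only [Matrix.transpose_apply, Matrix.of_apply, Fin.ext_iff, Fin.val_last]
    by_cases h : (i : ℕ) = k
    · simp [h]
    · have : (i : ℕ) < k := by omega
      simp [h, this]
  · intro i j
    split_ifs
    · exact hE _ _
    · exact ha _
  · intro i hi
    right
    have hi' : (i : ℕ) ≠ k := fun h => hi (Fin.ext h)
    refine ⟨⟨i + 1, by omega⟩, ?_, fun j => rfl⟩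
    intro h
    simpa using congrArg Fin.val h

lemma FS1_dw (k : ℕ) (E : ℂ → ℕ → ℕ → ℂ)
    (hE : ∀ j i, HasDerivAt (fun t => E t j i) (E z (j + 1) i) z) :
    deriv (fun t => FS1 k (E t) (E t k) k) z = FS1 k (E z) (E z (k + 1)) k := by
  simp only [← FS0_succ]
  unfold FS0
  rw [FS_deriv_one (fun (j i : Fin (k + 1)) t => E t j i)
    (fun j i => E z (j + 1) i) z (fun j i => hE _ _) (Fin.last k) ?_]
  · unfold FS1
    congr 1
    ext j i
    have h2 : (if (i : ℕ) < k then (i : ℕ) else k) = i := by split_ifs <;> omega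
    simp only [Matrix.of_apply, Fin.ext_iff, Fin.val_last, h2]
    by_cases h : (j : ℕ) = k
    · simp [h]
    · have : (j : ℕ) < k := by omega
      simp [h, this]
  · intro i hi
    right
    have hi' : (i : ℕ) ≠ k := fun h => hi (Fin.ext h)
    refine ⟨⟨i + 1, by omega⟩, ?_, fun j => rfl⟩
    intro h
    simpa using congrArg Fin.val h

lemma FS2_dw (k : ℕ) (E : ℂ → ℕ → ℕ → ℂ) (a : ℕ → ℂ)
    (hE : ∀ j i, HasDerivAt (fun t => E t j i) (E z (j + 1) i) z) :
    deriv (fun t => FS1 (k + 1) (E t) a (k + 1)) z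
      = FS2 k (E z) (E z (k + 1)) a k (k + 1) := by
  have h1 : ∀ t, FS1 (k + 1) (E t) a (k + 1) = Matrix.det (Matrix.of fun j i : Fin (k + 2) =>
      (if (j : ℕ) < k + 1 then E t j else a) i) := by
    intro t
    unfold FS1
    congr 1
    ext j i
    have h2 : (if (i : ℕ) < k + 1 then (i : ℕ) else k + 1) = i := by split_ifs <;> omega
    simp only [Matrix.of_apply, h2]
  simp only [h1]
  rw [FS_deriv_one (fun (j i : Fin (k + 2)) t => (if (j : ℕ) < k + 1 then E t j else a) i)
    (fun j i => if (j : ℕ) < k + 1 then E z (j + 1) i else 0) z ?_ ⟨k, by omega⟩ ?_]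
  · unfold FS2
    congr 1
    ext j i
    have h2 : (if (i : ℕ) < k then (i : ℕ) else if (i : ℕ) = k then k else k + 1) = i := by
      split_ifs <;> omega
    simp only [Matrix.of_apply, Fin.ext_iff, h2]
    rcases lt_trichotomy (j : ℕ) k with h | h | h
    · simp [h, h.ne, Nat.lt_succ_of_lt h]
    · simp [h]
    · simp [show ¬ (j : ℕ) < k by omega, show ¬ (j : ℕ) = k by omega,
        show ¬ (j : ℕ) < k + 1 by omega]
  · intro j i
    split_ifs
    · exact hE _ _
    · exact hasDerivAt_const _ _
  · intro j hj
    have hj' : (j : ℕ) ≠ k := fun h => hj (Fin.ext h)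
    by_cases h : (j : ℕ) < k + 1
    · right
      refine ⟨⟨j + 1, by omega⟩, ?_, fun i => ?_⟩
      · intro h
        simpa using congrArg Fin.val h
      · simp [show (j : ℕ) < k by omega, h]
    · left
      intro i
      simp [h]

lemma vtil_top : vtil n f g (n + 1) z w A = 0 := by
  classical
  unfold vtil
  have h : (Matrix.of fun j i : Fin (n + 1 + 1) =>
      if (j : ℕ) < n + 1 then ∑ B, Dv n f (i : ℕ) z B * Dv n g (j : ℕ) w B
      else Dv n f (i : ℕ) z A)
      = (Matrix.of fun (j : Fin (n + 1 + 1)) (B : Fin (n + 1)) =>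
          if (j : ℕ) < n + 1 then Dv n g (j : ℕ) w B else if B = A then 1 else 0) *
        (Matrix.of fun (B : Fin (n + 1)) (i : Fin (n + 1 + 1)) => Dv n f (i : ℕ) z B) := by
    ext j i
    simp only [Matrix.mul_apply, Matrix.of_apply]
    split_ifs
    · exact Finset.sum_congr rfl fun B _ => mul_comm _ _
    · simp
  rw [h]
  by_contra hne
  have hu := (Matrix.isUnit_iff_isUnit_det _).2 (isUnit_iff_ne_zero.2 hne)
  have h1 := Matrix.rank_of_isUnit _ hu
  have h2 := Matrix.rank_mul_le_left
    (Matrix.of fun (j : Fin (n + 1 + 1)) (B : Fin (n + 1)) =>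
          if (j : ℕ) < n + 1 then Dv n g (j : ℕ) w B else if B = A then 1 else 0)
    (Matrix.of fun (B : Fin (n + 1)) (i : Fin (n + 1 + 1)) => Dv n f (i : ℕ) z B)
  have h3 := Matrix.rank_le_card_width
    (Matrix.of fun (j : Fin (n + 1 + 1)) (B : Fin (n + 1)) =>
          if (j : ℕ) < n + 1 then Dv n g (j : ℕ) w B else if B = A then (1 : ℂ) else 0)
  rw [h1] at h2
  have h4 := h2.trans h3
  simp at h4

lemma tauF_swap (k : ℕ) : tauF n f g k z w = tauF n g f k w z := by
  unfold tauF
  rw [← Matrix.det_transpose]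
  congr 1
  ext i j
  simp only [Matrix.transpose_apply, Matrix.of_apply]
  exact Finset.sum_congr rfl fun B _ => mul_comm _ _

lemma vbar_swap (k : ℕ) : vbar n f g k z w A = vtil n g f k w z A := by
  unfold vbar vtil
  congr 1
  ext i j
  simp only [Matrix.of_apply]
  split_ifs
  · exact Finset.sum_congr rfl fun B _ => mul_comm _ _
  · rfl
end

lemma FS_main (n : ℕ) (f g : ℂ → Fin (n + 1) → ℂ)
    (hf : ∀ A, Differentiable ℂ fun z => f z A)
    (hg : ∀ A, Differentiable ℂ fun z => g z A) (ℓ : ℕ) (hl : ℓ ≤ n) (z w : ℂ)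
    (A : Fin (n + 1)) :
    (tauF n f g (ℓ + 1) z w * deriv (fun z' => vtil n f g ℓ z' w A) z
        = deriv (fun z' => tauF n f g (ℓ + 1) z' w) z * vtil n f g ℓ z w A
          + tauF n f g ℓ z w * (if ℓ < n then vtil n f g (ℓ + 1) z w A else 0)) ∧
      (tauF n f g ℓ z w * deriv (fun w' => vtil n f g ℓ z w' A) w
        = deriv (fun w' => tauF n f g ℓ z w') w * vtil n f g ℓ z w A
          - tauF n f g (ℓ + 1) z w * (if 1 ≤ ℓ then vtil n f g (ℓ - 1) z w A else 0)) := by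
  constructor
  · have h : (if ℓ < n then vtil n f g (ℓ + 1) z w A else 0) = vtil n f g (ℓ + 1) z w A := by
      split_ifs with h
      · rfl
      · obtain rfl : ℓ = n := by omega
        exact (vtil_top ..).symm
    rw [h]
    simp only [vtil_eq1, tauF_eq0]
    rw [FS1_succ]
    simp only [FS0_succ ℓ]
    rw [FS1_dz z ℓ (fun t => FSE n f g t w) (fun t i => Dv n f i t A)
      (fun j i => FSE_dz n f g hf j i z w) (fun i => Dv_hasDeriv n f hf i z A),
      FS1_dz z ℓ (fun t => FSE n f g t w) (fun t => FSE n f g t w ℓ)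
      (fun j i => FSE_dz n f g hf j i z w) (fun i => FSE_dz n f g hf ℓ i z w)]
    exact FS_dodgson ..
  · rcases ℓ with _ | k
    · simp [vtil, tauF]
    · simp only [vtil_eq1, tauF_eq0, Nat.add_sub_cancel, Nat.le_add_left, if_true]
      rw [FS2_dw w k (fun t => FSE n f g z t) (fun i => Dv n f i z A)
        (fun j i => FSE_dw n f g hg j i z w)]
      simp only [FS0_succ]
      rw [FS1_dw w k (fun t => FSE n f g z t) (fun j i => FSE_dw n f g hg j i z w),
        FS1_succ, FS1_succ]
      exact FS_plucker ..

/-- Frenet–Serret formulae for CP^n in denominator-free form, with the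
conventions ṽ_{−1} = v̄_{−1} = 0 and ṽ_{n+1} = v̄_{n+1} = 0. -/
theorem stmt10 (n : ℕ) (f g : ℂ → Fin (n + 1) → ℂ)
    (hf : ∀ A, Differentiable ℂ fun z => f z A)
    (hg : ∀ A, Differentiable ℂ fun z => g z A) :
    ∀ ℓ : ℕ, ℓ ≤ n → ∀ z w : ℂ, ∀ A : Fin (n + 1),
      (tauF n f g (ℓ + 1) z w * deriv (fun z' => vtil n f g ℓ z' w A) z
        = deriv (fun z' => tauF n f g (ℓ + 1) z' w) z * vtil n f g ℓ z w A
          + tauF n f g ℓ z w * (if ℓ < n then vtil n f g (ℓ + 1) z w A else 0)) ∧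
      (tauF n f g ℓ z w * deriv (fun w' => vtil n f g ℓ z w' A) w
        = deriv (fun w' => tauF n f g ℓ z w') w * vtil n f g ℓ z w A
          - tauF n f g (ℓ + 1) z w * (if 1 ≤ ℓ then vtil n f g (ℓ - 1) z w A else 0)) ∧
      (tauF n f g (ℓ + 1) z w * deriv (fun w' => vbar n f g ℓ z w' A) w
        = deriv (fun w' => tauF n f g (ℓ + 1) z w') w * vbar n f g ℓ z w A
          + tauF n f g ℓ z w * (if ℓ < n then vbar n f g (ℓ + 1) z w A else 0)) ∧
      (tauF n f g ℓ z w * deriv (fun z' => vbar n f g ℓ z' w A) z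
        = deriv (fun z' => tauF n f g ℓ z' w) z * vbar n f g ℓ z w A
          - tauF n f g (ℓ + 1) z w * (if 1 ≤ ℓ then vbar n f g (ℓ - 1) z w A else 0)) := by
  intro ℓ hl z w A
  refine ⟨(FS_main n f g hf hg ℓ hl z w A).1, (FS_main n f g hf hg ℓ hl z w A).2, ?_⟩
  simp only [vbar_swap, tauF_swap n f g]
  exact FS_main n g f hg hf ℓ hl w z A
end

section
/- Infinitesimal Plücker formulae (Theorem): let τ_0, τ_1, …, τ_m : ℝ² → ℝ be smooth, everywhere positive functions with τ_0 = 1, satisfying the 2D Toda equations ∂_x∂_y ln τ_{j+1} = τ_j · τ_{j+2} / τ_{j+1}² for all 0 ≤ j ≤ m−2. Define the induced metrics of the associated surfaces g^{(k)} = τ_k · τ_{k+2} / τ_{k+1}² for 0 ≤ k ≤ m−2. Then for every k with 1 ≤ k ≤ m−3, the curvature R^{(k)}√g^{(k)} := −∂_x∂_y ln g^{(k)} satisfies −∂_x∂_y ln g^{(k)} = −g^{(k+1)} + 2·g^{(k)} − g^{(k−1)}. -/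
open scoped BigOperators

theorem aux_diff (f : ℝ → ℝ → ℝ)
    (hf : ContDiff ℝ (⊤ : ℕ∞) fun p : ℝ × ℝ => f p.1 p.2) :
    (∀ x y, DifferentiableAt ℝ (fun y' => f x y') y) ∧
    (∀ x y, DifferentiableAt ℝ (fun x' => deriv (fun y' => f x' y') y) x) := by
  have hd : Differentiable ℝ fun p : ℝ × ℝ => f p.1 p.2 := hf.differentiable (by simp)
  have hline : ∀ x y : ℝ, HasDerivAt (fun y' : ℝ => (x, y')) ((0 : ℝ), (1 : ℝ)) y := fun x y =>
    (hasDerivAt_const y x).prodMk (hasDerivAt_id y)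
  have key : ∀ x y, HasDerivAt (fun y' => f x y')
      (fderiv ℝ (fun p : ℝ × ℝ => f p.1 p.2) (x, y) (0, 1)) y := fun x y =>
    (hd (x, y)).hasFDerivAt.comp_hasDerivAt y (hline x y)
  refine ⟨fun x y => (key x y).differentiableAt, fun x y => ?_⟩
  have e : (fun x' => deriv (fun y' => f x' y') y) =
      fun x' => fderiv ℝ (fun p : ℝ × ℝ => f p.1 p.2) (x', y) (0, 1) :=
    funext fun x' => (key x' y).deriv
  rw [e]
  have h1 : ContDiff ℝ 1 (fderiv ℝ (fun p : ℝ × ℝ => f p.1 p.2)) :=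
    hf.fderiv_right (by norm_cast)
  have h2 := h1.differentiable (by simp)
  have h3 : Differentiable ℝ fun x' : ℝ => (x', y) := by fun_prop
  exact ((h2.comp h3).clm_apply (differentiable_const _)) x

/-- infinitesimal Plücker formulae: if the positive smooth functions
τ_0 = 1, τ_1, …, τ_m satisfy the 2D Toda equations
∂_x∂_y ln τ_{j+1} = τ_j τ_{j+2}/τ_{j+1}², then the induced metrics
g^{(k)} = τ_k τ_{k+2}/τ_{k+1}² of the associated surfaces satisfy
−∂_x∂_y ln g^{(k)} = −g^{(k+1)} + 2 g^{(k)} − g^{(k−1)} for 1 ≤ k ≤ m−3. -/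
theorem stmt11 (m : ℕ) (τ : ℕ → ℝ → ℝ → ℝ)
    (hsmooth : ∀ j ≤ m, ContDiff ℝ (⊤ : ℕ∞) fun p : ℝ × ℝ => τ j p.1 p.2)
    (hpos : ∀ j ≤ m, ∀ x y : ℝ, 0 < τ j x y)
    (h0 : ∀ x y : ℝ, τ 0 x y = 1)
    (htoda : ∀ j : ℕ, j + 2 ≤ m → ∀ x y : ℝ,
      deriv (fun x' => deriv (fun y' => Real.log (τ (j + 1) x' y')) y) x
        = τ j x y * τ (j + 2) x y / (τ (j + 1) x y) ^ 2) :
    ∀ k : ℕ, 1 ≤ k → k + 3 ≤ m → ∀ x y : ℝ,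
      -(deriv (fun x' => deriv (fun y' =>
          Real.log (τ k x' y' * τ (k + 2) x' y' / (τ (k + 1) x' y') ^ 2)) y) x)
        = -(τ (k + 1) x y * τ (k + 3) x y / (τ (k + 2) x y) ^ 2)
          + 2 * (τ k x y * τ (k + 2) x y / (τ (k + 1) x y) ^ 2)
          - τ (k - 1) x y * τ (k + 1) x y / (τ k x y) ^ 2 := by
  intro k hk hkm x y
  obtain ⟨n, rfl⟩ : ∃ n, k = n + 1 := ⟨k - 1, by omega⟩
  have A : ∀ j ≤ m, _ := fun j hj => aux_diff (fun x y => Real.log (τ j x y))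
    ((hsmooth j hj).log fun p => (hpos j hj p.1 p.2).ne')
  obtain ⟨a1, a2⟩ := A (n + 1) (by omega)
  obtain ⟨b1, b2⟩ := A (n + 1 + 1) (by omega)
  obtain ⟨c1, c2⟩ := A (n + 1 + 2) (by omega)
  have e1 : ∀ x' y', Real.log (τ (n + 1) x' y' * τ (n + 1 + 2) x' y' / (τ (n + 1 + 1) x' y') ^ 2)
      = Real.log (τ (n + 1) x' y') + Real.log (τ (n + 1 + 2) x' y')
        - 2 * Real.log (τ (n + 1 + 1) x' y') := by
    intro x' y'
    have p1 := (hpos (n + 1) (by omega) x' y').ne'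
    have p2 := (hpos (n + 1 + 1) (by omega) x' y').ne'
    have p3 := (hpos (n + 1 + 2) (by omega) x' y').ne'
    rw [Real.log_div (mul_ne_zero p1 p3) (pow_ne_zero 2 p2), Real.log_mul p1 p3, Real.log_pow]
    norm_num
  have e2 : ∀ x', deriv (fun y' => Real.log (τ (n + 1) x' y' * τ (n + 1 + 2) x' y' /
        (τ (n + 1 + 1) x' y') ^ 2)) y
      = deriv (fun y' => Real.log (τ (n + 1) x' y')) y
        + deriv (fun y' => Real.log (τ (n + 1 + 2) x' y')) y
        - 2 * deriv (fun y' => Real.log (τ (n + 1 + 1) x' y')) y := by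
    intro x'
    simp only [e1]
    exact (((a1 x' y).hasDerivAt.add (c1 x' y).hasDerivAt).sub
      ((b1 x' y).hasDerivAt.const_mul 2)).deriv
  simp only [e2]
  have e3 := (((a2 x y).hasDerivAt.add (c2 x y).hasDerivAt).sub
      ((b2 x y).hasDerivAt.const_mul 2)).deriv
  have t1 := htoda n (by omega) x y
  have t2 := htoda (n + 1) (by omega) x y
  have t3 := htoda (n + 1 + 1) (by omega) x y
  refine (congrArg Neg.neg e3).trans ?_
  simp only [Nat.add_sub_cancel]
  rw [t1, t2, show n + 1 + 2 = n + 1 + 1 + 1 from rfl, t3]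
  ring
end

section
/- Behavior of the tau-functions at a singular point (Theorem): let z₀, w₀ ∈ ℂ and let β_1,…,β_n, β̄_1,…,β̄_n ∈ ℕ be ramification indices; set σ(A) = A + β_1 + ⋯ + β_A and σ̄(A) = A + β̄_1 + ⋯ + β̄_A for A = 0,…,n. Assume each component f_A vanishes at z₀ to order at least σ(A) (i.e. (z−z₀)^{σ(A)} divides f_A in the ring of functions analytic near z₀) and each g_A vanishes at w₀ to order at least σ̄(A). Then for every 1 ≤ ℓ ≤ n+1: for each fixed w ∈ ℂ the analytic function z ↦ τ_ℓ(z,w) vanishes at z₀ to order at least ∑_{t=1}^{ℓ−1} (ℓ−t)·β_t, and for each fixed z ∈ ℂ the analytic function w ↦ τ_ℓ(z,w) vanishes at w₀ to order at least ∑_{t=1}^{ℓ−1} (ℓ−t)·β̄_t. -/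
open scoped BigOperators

/-- `F` vanishes at `z₀` to order at least `N`: `(z − z₀)^N` divides `F` in the ring of
functions analytic near `z₀`. -/
def VanishesToOrder (F : ℂ → ℂ) (z₀ : ℂ) (N : ℕ) : Prop :=
  ∃ h : ℂ → ℂ, AnalyticAt ℂ h z₀ ∧ ∀ᶠ z in nhds z₀, F z = (z - z₀) ^ N * h z

theorem VTO.mono {F : ℂ → ℂ} {z₀ : ℂ} {M N : ℕ} (h : VanishesToOrder F z₀ N) (hMN : M ≤ N) :
    VanishesToOrder F z₀ M := by
  obtain ⟨k, hk, he⟩ := h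
  refine ⟨fun z => (z - z₀) ^ (N - M) * k z, by fun_prop, ?_⟩
  filter_upwards [he] with z hz
  rw [hz, ← mul_assoc, ← pow_add, Nat.add_sub_cancel' hMN]

theorem VTO.zero (z₀ : ℂ) (N : ℕ) : VanishesToOrder (fun _ => 0) z₀ N :=
  ⟨fun _ => 0, analyticAt_const, by simp⟩

theorem VTO.mul_const {F : ℂ → ℂ} {z₀ : ℂ} {N : ℕ} (h : VanishesToOrder F z₀ N) (c : ℂ) :
    VanishesToOrder (fun z => F z * c) z₀ N := by
  obtain ⟨k, hk, he⟩ := h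
  refine ⟨fun z => k z * c, by fun_prop, ?_⟩
  filter_upwards [he] with z hz
  rw [hz, mul_assoc]

theorem VTO.sum {ι : Type*} (s : Finset ι) {F : ι → ℂ → ℂ} {z₀ : ℂ} {N : ℕ}
    (h : ∀ i ∈ s, VanishesToOrder (F i) z₀ N) :
    VanishesToOrder (fun z => ∑ i ∈ s, F i z) z₀ N := by
  classical
  induction s using Finset.induction_on with
  | empty => simpa using VTO.zero z₀ N
  | insert a s ha ih =>
    obtain ⟨k, hk, he⟩ := ih fun i hi => h i (Finset.mem_insert_of_mem hi)
    obtain ⟨k', hk', he'⟩ := h a (Finset.mem_insert_self a s)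
    refine ⟨fun z => k' z + k z, by fun_prop, ?_⟩
    filter_upwards [he, he'] with z hz hz'
    rw [Finset.sum_insert ha, hz, hz', mul_add]

theorem VTO.prod {ι : Type*} (s : Finset ι) {F : ι → ℂ → ℂ} {z₀ : ℂ} {N : ι → ℕ}
    (h : ∀ i ∈ s, VanishesToOrder (F i) z₀ (N i)) :
    VanishesToOrder (fun z => ∏ i ∈ s, F i z) z₀ (∑ i ∈ s, N i) := by
  classical
  induction s using Finset.induction_on with
  | empty => exact ⟨fun _ => 1, analyticAt_const, by simp⟩
  | insert a s ha ih =>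
    obtain ⟨k, hk, he⟩ := ih fun i hi => h i (Finset.mem_insert_of_mem hi)
    obtain ⟨k', hk', he'⟩ := h a (Finset.mem_insert_self a s)
    refine ⟨fun z => k' z * k z, by fun_prop, ?_⟩
    filter_upwards [he, he'] with z hz hz'
    rw [Finset.prod_insert ha, Finset.sum_insert ha, hz, hz', pow_add]
    ring

theorem VTO.deriv {F : ℂ → ℂ} {z₀ : ℂ} {N : ℕ} (h : VanishesToOrder F z₀ N) :
    VanishesToOrder (deriv F) z₀ (N - 1) := by
  obtain ⟨k, hk, he⟩ := h
  have hk' : AnalyticAt ℂ (_root_.deriv k) z₀ := hk.deriv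
  refine ⟨fun z => N * k z + (z - z₀) ^ (N - (N - 1)) * _root_.deriv k z, by fun_prop, ?_⟩
  filter_upwards [he.eventually_nhds, hk.eventually_analyticAt] with z hz hkz
  have h1 : F =ᶠ[nhds z] fun z => (z - z₀) ^ N * k z := hz
  rw [h1.deriv_eq]
  have h2 : HasDerivAt (fun z : ℂ => (z - z₀) ^ N * k z)
      ((N * (z - z₀) ^ (N - 1) * 1) * k z + (z - z₀) ^ N * _root_.deriv k z) z :=
    (((hasDerivAt_id z).sub_const z₀).pow N).mul hkz.differentiableAt.hasDerivAt
  rw [h2.deriv]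
  have h3 : (z - z₀) ^ N = (z - z₀) ^ (N - 1) * (z - z₀) ^ (N - (N - 1)) := by
    rw [← pow_add]; congr 1; omega
  rw [h3]; ring

theorem VTO.iteratedDeriv {F : ℂ → ℂ} {z₀ : ℂ} {N : ℕ} (h : VanishesToOrder F z₀ N) (i : ℕ) :
    VanishesToOrder (iteratedDeriv i F) z₀ (N - i) := by
  induction i with
  | zero => simpa using h
  | succ i ih =>
    rw [iteratedDeriv_succ, Nat.sub_add_eq]
    exact VTO.deriv ih

theorem sum_range_card_le (S : ℕ → ℕ) (hS : Monotone S) (s : Finset ℕ) :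
    ∑ i ∈ Finset.range s.card, S i ≤ ∑ a ∈ s, S a := by
  induction s using Finset.induction_on_max with
  | empty => simp
  | insert a s hs ih =>
    have ha : a ∉ s := fun h => lt_irrefl _ (hs a h)
    have hc : s.card ≤ a := by
      have : s ⊆ Finset.range a := fun x hx => Finset.mem_range.2 (hs x hx)
      simpa using Finset.card_le_card this
    rw [Finset.card_insert_of_notMem ha, Finset.sum_range_succ, Finset.sum_insert ha, add_comm]
    exact add_le_add (hS hc) ih

theorem sum_beta (β : ℕ → ℕ) (ℓ : ℕ) :
    ∑ t ∈ Finset.Icc 1 (ℓ - 1), (ℓ - t) * β t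
      = ∑ i ∈ Finset.range ℓ, ∑ t ∈ Finset.Icc 1 i, β t := by
  induction ℓ with
  | zero => simp
  | succ m ih =>
    rw [Finset.sum_range_succ, ← ih, Nat.add_sub_cancel]
    have h1 : ∑ t ∈ Finset.Icc 1 (m - 1), (m - t) * β t = ∑ t ∈ Finset.Icc 1 m, (m - t) * β t := by
      apply Finset.sum_subset
      · intro x hx; simp only [Finset.mem_Icc] at *; omega
      · intro x hx hx'
        simp only [Finset.mem_Icc] at *
        have : m - x = 0 := by omega
        simp [this]
    rw [h1, ← Finset.sum_add_distrib]
    refine Finset.sum_congr rfl fun t ht => ?_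
    have := (Finset.mem_Icc.1 ht).2
    rw [Nat.sub_add_comm this]; ring

theorem tauF_expand (n : ℕ) (f g : ℂ → Fin (n + 1) → ℂ) (ℓ : ℕ) (z w : ℂ) :
    tauF n f g ℓ z w = ∑ φ : Fin ℓ → Fin (n + 1), (∏ i : Fin ℓ, Dv n f (i : ℕ) z (φ i)) *
      Matrix.det (Matrix.of fun i j : Fin ℓ => Dv n g (j : ℕ) w (φ i)) := by
  have h := (Matrix.detRowAlternating (n := Fin ℓ) (R := ℂ)).toMultilinearMap.map_sum
    (fun (i : Fin ℓ) (A : Fin (n + 1)) =>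
      Dv n f (i : ℕ) z A • (fun j : Fin ℓ => Dv n g (j : ℕ) w A))
  simp only [MultilinearMap.map_smul_univ] at h
  refine Eq.trans ?_ h
  unfold tauF
  change Matrix.det _ = Matrix.det _
  congr 1
  ext i j
  simp

theorem tauF_symm (n : ℕ) (f g : ℂ → Fin (n + 1) → ℂ) (ℓ : ℕ) (z w : ℂ) :
    tauF n f g ℓ z w = tauF n g f ℓ w z := by
  unfold tauF
  rw [← Matrix.det_transpose]
  congr 1
  ext i j
  simp [mul_comm]

theorem tau_half (n : ℕ) (f g : ℂ → Fin (n + 1) → ℂ) (z₀ : ℂ) (β : ℕ → ℕ)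
    (hvf : ∀ A : Fin (n + 1), VanishesToOrder (fun z => f z A) z₀
      ((A : ℕ) + ∑ t ∈ Finset.Icc 1 (A : ℕ), β t)) (ℓ : ℕ) (w : ℂ) :
    VanishesToOrder (fun z => tauF n f g ℓ z w) z₀
        (∑ t ∈ Finset.Icc 1 (ℓ - 1), (ℓ - t) * β t) := by
  simp only [tauF_expand]
  refine VTO.sum _ fun φ _ => ?_
  by_cases hφ : Function.Injective φ
  · refine VTO.mul_const ?_ _
    refine VTO.mono (VTO.prod Finset.univ fun i _ => VTO.iteratedDeriv (hvf (φ i)) (i : ℕ)) ?_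
    rw [sum_beta]
    set S : ℕ → ℕ := fun a => a + ∑ t ∈ Finset.Icc 1 a, β t with hS
    have hmono : Monotone S := fun a b hab =>
      add_le_add hab (Finset.sum_le_sum_of_subset (Finset.Icc_subset_Icc_right hab))
    have hinj : Function.Injective fun i : Fin ℓ => (φ i : ℕ) :=
      fun a b h => hφ (Fin.ext h)
    have h1 := sum_range_card_le S hmono (Finset.univ.image fun i : Fin ℓ => (φ i : ℕ))
    rw [Finset.card_image_of_injective _ hinj, Finset.sum_image hinj.injOn, Finset.card_univ,
      Fintype.card_fin] at h1
    have h2 : ∑ i : Fin ℓ, S (φ i) ≤ ∑ i : Fin ℓ, (S (φ i) - (i : ℕ)) + ∑ i : Fin ℓ, (i : ℕ) := by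
      rw [← Finset.sum_add_distrib]
      exact Finset.sum_le_sum fun i _ => by omega
    have h3 : ∑ i ∈ Finset.range ℓ, S i
        = ∑ i ∈ Finset.range ℓ, i + ∑ i ∈ Finset.range ℓ, ∑ t ∈ Finset.Icc 1 i, β t :=
      Finset.sum_add_distrib
    rw [Fin.sum_univ_eq_sum_range (fun i => i)] at h2
    change _ ≤ ∑ i : Fin ℓ, (S (φ i) - (i : ℕ))
    omega
  · have : ∃ a b, φ a = φ b ∧ a ≠ b := by
      simpa [Function.Injective] using hφ
    obtain ⟨a, b, hab, hne⟩ := this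
    rw [Matrix.det_zero_of_row_eq hne (by ext j; simp [hab])]
    simpa using VTO.zero z₀ _

/-- behavior of the tau-functions at a singular point: if f_A vanishes at z₀
to order ≥ σ(A) = A + β_1 + ⋯ + β_A and g_A vanishes at w₀ to order ≥ σ̄(A), then for
1 ≤ ℓ ≤ n+1, τ_ℓ(·,w) vanishes at z₀ to order ≥ ∑_{t=1}^{ℓ−1}(ℓ−t)β_t and τ_ℓ(z,·)
vanishes at w₀ to order ≥ ∑_{t=1}^{ℓ−1}(ℓ−t)β̄_t. -/
theorem stmt12 (n : ℕ) (f g : ℂ → Fin (n + 1) → ℂ)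
    (hf : ∀ A, Differentiable ℂ fun z => f z A)
    (hg : ∀ A, Differentiable ℂ fun z => g z A)
    (z₀ w₀ : ℂ) (β βbar : ℕ → ℕ)
    (hvf : ∀ A : Fin (n + 1), VanishesToOrder (fun z => f z A) z₀
      ((A : ℕ) + ∑ t ∈ Finset.Icc 1 (A : ℕ), β t))
    (hvg : ∀ A : Fin (n + 1), VanishesToOrder (fun w => g w A) w₀
      ((A : ℕ) + ∑ t ∈ Finset.Icc 1 (A : ℕ), βbar t)) :
    ∀ ℓ : ℕ, 1 ≤ ℓ → ℓ ≤ n + 1 →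
      (∀ w : ℂ, VanishesToOrder (fun z => tauF n f g ℓ z w) z₀
        (∑ t ∈ Finset.Icc 1 (ℓ - 1), (ℓ - t) * β t)) ∧
      (∀ z : ℂ, VanishesToOrder (fun w => tauF n f g ℓ z w) w₀
        (∑ t ∈ Finset.Icc 1 (ℓ - 1), (ℓ - t) * βbar t)) := by
  intro ℓ _ _
  refine ⟨fun w => tau_half n f g z₀ β hvf ℓ w, fun z => ?_⟩
  simp only [tauF_symm n f g]
  exact tau_half n g f w₀ βbar hvg ℓ z
end

section
/- Liouville solutions (Proposition 'Liouville solutions'): let f, g : ℂ → ℂ be entire functions. Define G(z,w) = f′(z)·g′(w)/(1 + f(z)·g(w))² at all points (z,w) ∈ ℂ² where 1 + f(z)g(w) ≠ 0. Then at every such point, G·∂_z∂_w G − (∂_z G)·(∂_w G) = −2·G³. (Equivalently, wherever G ≠ 0, ∂_z∂_w ln G = −2G: the induced metric of a W-surface in CP¹ satisfies Liouville's equation.) -/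
open scoped BigOperators

/-- Liouville solutions: for entire f, g and
G(z,w) = f′(z)g′(w)/(1 + f(z)g(w))², at every point where 1 + f(z)g(w) ≠ 0 one has
G·∂_z∂_w G − (∂_z G)(∂_w G) = −2 G³ (Liouville's equation in bilinear form). -/
theorem stmt14 (f g : ℂ → ℂ) (hf : Differentiable ℂ f) (hg : Differentiable ℂ g)
    (G : ℂ → ℂ → ℂ)
    (hG : ∀ z w : ℂ, G z w = deriv f z * deriv g w / (1 + f z * g w) ^ 2) :
    ∀ z w : ℂ, 1 + f z * g w ≠ 0 →
      G z w * deriv (fun z' => deriv (fun w' => G z' w') w) z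
        - deriv (fun z' => G z' w) z * deriv (fun w' => G z w') w
        = -2 * (G z w) ^ 3 := by
  intro z w h
  have hf' : Differentiable ℂ (deriv f) := hf.deriv
  have hg' : Differentiable ℂ (deriv g) := hg.deriv
  have hw : ∀ z', 1 + f z' * g w ≠ 0 → deriv (fun w' => G z' w') w =
      deriv f z' * (deriv (deriv g) w * (1 + f z' * g w) - 2 * f z' * deriv g w ^ 2)
        / (1 + f z' * g w) ^ 3 := by
    intro z' h'
    simp only [hG]
    have h1 := (((hg' w).hasDerivAt.const_mul (deriv f z')).div
      ((((hg w).hasDerivAt.const_mul (f z')).const_add 1).pow 2) (pow_ne_zero 2 h'))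
    refine h1.deriv.trans ?_
    simp only [Pi.pow_apply]
    field_simp
    push_cast
    ring
  have hz : deriv (fun z' => G z' w) z =
      deriv g w * (deriv (deriv f) z * (1 + f z * g w) - 2 * g w * deriv f z ^ 2)
        / (1 + f z * g w) ^ 3 := by
    simp only [hG]
    have h1 := (((hf' z).hasDerivAt.mul_const (deriv g w)).div
      ((((hf z).hasDerivAt.mul_const (g w)).const_add 1).pow 2) (pow_ne_zero 2 h))
    refine h1.deriv.trans ?_
    simp only [Pi.pow_apply]
    field_simp
    push_cast
    ring
  have hev : (fun z' => deriv (fun w' => G z' w') w) =ᶠ[nhds z] fun z' =>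
      deriv f z' * (deriv (deriv g) w * (1 + f z' * g w) - 2 * f z' * deriv g w ^ 2)
        / (1 + f z' * g w) ^ 3 := by
    have hc : ContinuousAt (fun z' => 1 + f z' * g w) z :=
      (((hf z).hasDerivAt.mul_const (g w)).const_add 1).continuousAt
    filter_upwards [hc.eventually_ne h] with z' h'
    exact hw z' h'
  have hD := ((hf z).hasDerivAt.mul_const (g w)).const_add 1
  have hN := (hD.const_mul (deriv (deriv g) w)).sub
    (((hf z).hasDerivAt.const_mul 2).mul_const (deriv g w ^ 2))
  have h2 := ((hf' z).hasDerivAt.mul hN).div (hD.pow 3) (pow_ne_zero 3 h)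
  have hzw := hev.deriv_eq.trans h2.deriv
  rw [hzw, hz, hw z h, hG]
  simp only [Pi.pow_apply, Pi.mul_apply, Pi.sub_apply]
  field_simp
  push_cast
  ring
end
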